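/- (Theorem 27) Let 0 < θ₀ < θ₁ < 1, 0 < θ < 1, 0 < r, r₀, r₁, q₀, q₁ ≤ ∞, a, a₀, a₁, b₀, b₁ ∈ SV, ‖s^{-1/r₀} b₀(s)/a₀(s)‖_{r₀,(0,1)} < ∞, and ‖s^{-1/r₁} b₁(s)/a₁(s)‖_{r₁,(0,1)} < ∞. Put c₀(t) = a₀(t) ‖s^{-1/r₀} b₀(s)/a₀(s)‖_{r₀,(0,t)}, c₁(t) = a₁(t) ‖s^{-1/r₁} b₁(s)/a₁(s)‖_{r₁,(0,t)}, and ρ(t) = t^{θ₁-θ₀} c₀(t)/c₁(t). Then (Ā^𝓡_{θ₀,r₀,b₀,q₀,a₀}, Ā^𝓡_{θ₁,r₁,b₁,q₁,a₁})_{θ,r;a} ≅ Ā_{η,r;a^#}, where η = (1-θ)θ₀ + θθ₁ and a^#(t) = c₀(t)^{1-θ} c₁(t)^θ a(ρ(t)). -/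

import Mathlib

open MeasureTheory Set ENNReal Filter

noncomputable section

/-- The `L_q` quasi-norm (with respect to Lebesgue measure) of an `ℝ≥0∞`-valued
function over a set of reals; for `q = ∞` it is the essential supremum. -/
def LqNorm (q : ℝ≥0∞) (s : Set ℝ) (g : ℝ → ℝ≥0∞) : ℝ≥0∞ :=
  if q = ∞ then essSup g (volume.restrict s)
  else (∫⁻ t in s, g t ^ q.toReal) ^ q⁻¹.toReal

/-- The weight `s ↦ s ^ (-1/r) * b s`, as an `ℝ≥0∞`-valued function
(`1/∞ = 0` by convention). -/
def svWgt (r : ℝ≥0∞) (b : ℝ → ℝ) : ℝ → ℝ≥0∞ :=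
  fun s => ENNReal.ofReal (s ^ (-(r⁻¹.toReal)) * b s)

/-- `f` and `g` are equivalent on `s`: each is bounded by a constant multiple
of the other there. -/
def EquivOn (s : Set ℝ) (f g : ℝ → ℝ) : Prop :=
  ∃ C : ℝ, 0 < C ∧ ∀ t ∈ s, C⁻¹ * g t ≤ f t ∧ f t ≤ C * g t

/-- A positive measurable function `b` on `(0,∞)` is slowly varying if for every
`ε > 0`, `t ^ ε * b t` is equivalent to a non-decreasing function and
`t ^ (-ε) * b t` is equivalent to a non-increasing function. -/
def SlowlyVarying (b : ℝ → ℝ) : Prop :=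
  AEMeasurable b (volume.restrict (Ioi 0)) ∧ (∀ t ∈ Ioi (0:ℝ), 0 < b t) ∧
    ∀ ε : ℝ, 0 < ε →
      (∃ g : ℝ → ℝ, MonotoneOn g (Ioi 0) ∧ EquivOn (Ioi 0) (fun t => t ^ ε * b t) g) ∧
      (∃ g : ℝ → ℝ, AntitoneOn g (Ioi 0) ∧ EquivOn (Ioi 0) (fun t => t ^ (-ε) * b t) g)

/-- A quasi-Banach space continuously embedded into the ambient (Hausdorff) space `E`,
recorded via its extended-real-valued quasi-norm; the space itself is the set of
vectors of finite quasi-norm. -/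
structure QuasiBanach (E : Type*) [AddCommGroup E] [Module ℝ E] where
  N : E → ℝ≥0∞
  zero : N 0 = 0
  definite : ∀ x, N x = 0 → x = 0
  smul : ∀ (c : ℝ) (x : E), N (c • x) = ENNReal.ofReal |c| * N x
  quasi : ∃ C : ℝ≥0∞, 1 ≤ C ∧ C ≠ ∞ ∧ ∀ x y, N (x + y) ≤ C * (N x + N y)
  complete : ∀ f : ℕ → E,
    (∀ ε : ℝ≥0∞, 0 < ε → ∃ M : ℕ, ∀ m ≥ M, ∀ n ≥ M, N (f m - f n) < ε) →
    (∀ n, N (f n) ≠ ∞) →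
    ∃ g : E, N g ≠ ∞ ∧ Tendsto (fun n => N (f n - g)) atTop (nhds 0)

variable {E : Type*} [AddCommGroup E] [Module ℝ E]

/-- The Peetre K-functional of the couple whose quasi-norms are `N₀`, `N₁`. -/
def Kf (N₀ N₁ : E → ℝ≥0∞) (t : ℝ) (f : E) : ℝ≥0∞ :=
  ⨅ g : E, N₀ g + ENNReal.ofReal t * N₁ (f - g)

/-- The quasi-norm of the real interpolation space `Ā_{θ,q;b}`. -/
def normK (N₀ N₁ : E → ℝ≥0∞) (θ : ℝ) (q : ℝ≥0∞) (b : ℝ → ℝ) (f : E) : ℝ≥0∞ :=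
  LqNorm q (Ioi 0) fun u =>
    ENNReal.ofReal (u ^ (-θ - q⁻¹.toReal) * b u) * Kf N₀ N₁ u f

/-- The quasi-norm of the limiting interpolation space `Ā^𝓛_{σ,r,b,q,a}`. -/
def normL (N₀ N₁ : E → ℝ≥0∞) (σ : ℝ) (r q : ℝ≥0∞) (b a : ℝ → ℝ) (f : E) : ℝ≥0∞ :=
  LqNorm r (Ioi 0) fun t =>
    ENNReal.ofReal (t ^ (-(r⁻¹.toReal)) * (b t / a t)) *
      LqNorm q (Ioo 0 t) fun u =>
        ENNReal.ofReal (u ^ (-σ - q⁻¹.toReal) * a u) * Kf N₀ N₁ u f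

/-- The quasi-norm of the limiting interpolation space `Ā^𝓡_{σ,r,b,q,a}`. -/
def normR (N₀ N₁ : E → ℝ≥0∞) (σ : ℝ) (r q : ℝ≥0∞) (b a : ℝ → ℝ) (f : E) : ℝ≥0∞ :=
  LqNorm r (Ioi 0) fun t =>
    ENNReal.ofReal (t ^ (-(r⁻¹.toReal)) * (b t / a t)) *
      LqNorm q (Ioi t) fun u =>
        ENNReal.ofReal (u ^ (-σ - q⁻¹.toReal) * a u) * Kf N₀ N₁ u f

/-- Two (extended-real-valued) quasi-norms define the same space with
equivalent quasi-norms. -/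
def EquivNorms (nX nY : E → ℝ≥0∞) : Prop :=
  ∃ C : ℝ≥0∞, 0 < C ∧ C ≠ ∞ ∧ ∀ f : E, C⁻¹ * nY f ≤ nX f ∧ nX f ≤ C * nY f

/-!
A slowly varying weight changes by at most a small power of the ratio of its arguments, and a
K-functional by at most the ratio itself, so every function that enters the interpolation norms is
roughly constant on dyadic blocks and its `L_q (dt / t)` norm is an `ℓ_q` norm over a geometric
sequence. In these terms an `𝓡`-space behaves like `Ā_{σ,∞;c}` as far as reiteration is concerned:
its quasi-norm dominates `t ^ (-σ) * c t * K(t, f)` for every `t`, and it is at most a multiple of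
that value at `t` when `K(·, f)` is concentrated around `t`. For a couple of spaces of this kind,
splitting `f = g + (f - g)` almost optimally at `t` gives Holmstedt's comparison:
`ρ(t) ^ (-θ) * a(ρ(t)) * K(ρ(t), f; X₀, X₁)` dominates `x(t) = t ^ (-η) * a^#(t) * K(t, f; A₀, A₁)`
and is dominated by a maximal function of `x`. The maximal function is bounded on `L_r (dt / t)`,
because on a geometric sequence it is a supremum against a geometric kernel; and `t ↦ ρ(t)`
preserves the norm of a tempered function, because it maps sparse geometric sequences to lacunary
ones.
-/

section SymmRatio

variable {s t u L : ℝ}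

/-- The symmetric ratio `max (s / t) (t / s)`, that is `exp |log s - log t|`: the multiplicative
distance of two positive reals. -/
def symmRatio (s t : ℝ) : ℝ := max (s / t) (t / s)

theorem symmRatio_comm (s t : ℝ) : symmRatio s t = symmRatio t s := max_comm _ _

theorem symmRatio_of_le (hs : 0 < s) (h : s ≤ t) : symmRatio s t = t / s :=
  max_eq_right (((div_le_one (hs.trans_le h)).2 h).trans ((one_le_div hs).2 h))

theorem symmRatio_of_ge (ht : 0 < t) (h : t ≤ s) : symmRatio s t = s / t := by
  rw [symmRatio_comm, symmRatio_of_le ht h]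

theorem one_le_symmRatio (hs : 0 < s) (ht : 0 < t) : 1 ≤ symmRatio s t := by
  rcases le_total s t with h | h
  · rw [symmRatio_of_le hs h]; exact (one_le_div hs).2 h
  · rw [symmRatio_of_ge ht h]; exact (one_le_div ht).2 h

theorem symmRatio_pos (hs : 0 < s) (ht : 0 < t) : 0 < symmRatio s t :=
  one_pos.trans_le (one_le_symmRatio hs ht)

theorem symmRatio_le (hs : 0 < s) (ht : 0 < t) (hst : s ≤ L * t) (hts : t ≤ L * s) :
    symmRatio s t ≤ L :=
  max_le ((div_le_iff₀ ht).2 hst) ((div_le_iff₀ hs).2 hts)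

theorem symmRatio_le_mul (hs : 0 < s) (ht : 0 < t) (hu : 0 < u) :
    symmRatio s u ≤ symmRatio s t * symmRatio t u := by
  have hst := (symmRatio_pos hs ht).le
  refine max_le ?_ ?_
  · calc s / u = s / t * (t / u) := by field_simp
      _ ≤ symmRatio s t * symmRatio t u := by
        gcongr <;> exact le_max_left _ _
  · calc u / s = t / s * (u / t) := by field_simp
      _ ≤ symmRatio s t * symmRatio t u := by
        gcongr <;> exact le_max_right _ _

theorem symmRatio_eq_mul (ht : 0 < t) (hts : t ≤ s) (hsu : s ≤ u) :
    symmRatio u t = symmRatio s t * symmRatio u s := by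
  have hs := ht.trans_le hts
  rw [symmRatio_of_ge ht (hts.trans hsu), symmRatio_of_ge ht hts, symmRatio_of_ge hs hsu]
  field_simp

theorem symmRatio_zpow (hL : 1 ≤ L) (j k : ℤ) :
    symmRatio (L ^ j) (L ^ k) = L ^ (k - j).natAbs := by
  have hL0 : 0 < L := one_pos.trans_le hL
  wlog hjk : j ≤ k generalizing j k
  · rw [symmRatio_comm, this k j (le_of_not_ge hjk), ← Int.natAbs_neg, neg_sub]
  rw [symmRatio_of_le (zpow_pos hL0 _) (zpow_le_zpow_right₀ hL hjk), ← zpow_sub₀ hL0.ne',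
    ← zpow_natCast, Int.natAbs_of_nonneg (sub_nonneg.2 hjk)]

theorem rpow_le_symmRatio_rpow_abs_mul (hs : 0 < s) (ht : 0 < t) (p : ℝ) :
    s ^ p ≤ symmRatio s t ^ |p| * t ^ p := by
  rw [← div_le_iff₀ (Real.rpow_pos_of_pos ht _), ← Real.div_rpow hs.le ht.le]
  rcases le_total 0 p with h | h
  · rw [abs_of_nonneg h]
    exact Real.rpow_le_rpow (div_pos hs ht).le (le_max_left _ _) h
  · rw [abs_of_nonpos h, ← inv_div, Real.inv_rpow (div_pos ht hs).le,
      ← Real.rpow_neg (div_pos ht hs).le]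
    exact Real.rpow_le_rpow (div_pos ht hs).le (le_max_right _ _) (neg_nonneg.2 h)

end SymmRatio

section PotterBounded

/-- Quantitative slow variation: the Potter bounds `b s ≤ C * symmRatio s t ^ ε * b t`, one for
each `ε > 0`. Measurability is not part of this notion. -/
structure PotterBounded (b : ℝ → ℝ) : Prop where
  pos : ∀ t, 0 < t → 0 < b t
  bound : ∀ ε : ℝ, 0 < ε → ∃ C : ℝ, 0 < C ∧
    ∀ s t, 0 < s → 0 < t → b s ≤ C * symmRatio s t ^ ε * b t

theorem EquivOn.exists_le_mul {S : Set ℝ} {w g : ℝ → ℝ} (h : EquivOn S w g) :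
    ∃ C : ℝ, 0 < C ∧ ∀ x ∈ S, ∀ y ∈ S, g x ≤ g y → w x ≤ C * w y := by
  obtain ⟨C, hC, h⟩ := h
  refine ⟨C * C, by positivity, fun x hx y hy hxy => ?_⟩
  have hgy : g y ≤ C * w y := (inv_mul_le_iff₀ hC).1 (h y hy).1
  calc w x ≤ C * g x := (h x hx).2
    _ ≤ C * (C * w y) := by gcongr; exact hxy.trans hgy
    _ = C * C * w y := (mul_assoc _ _ _).symm

theorem le_mul_div_rpow_mul_of_rpow_mul_le {s t x y C p : ℝ} (hs : 0 < s) (ht : 0 < t)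
    (h : s ^ p * x ≤ C * (t ^ p * y)) : x ≤ C * (t / s) ^ p * y := by
  have hsp : 0 < s ^ p := Real.rpow_pos_of_pos hs p
  rw [Real.div_rpow ht.le hs.le, ← mul_le_mul_iff_right₀ hsp]
  calc s ^ p * x ≤ C * (t ^ p * y) := h
    _ = s ^ p * (C * (t ^ p / s ^ p) * y) := by field_simp

theorem SlowlyVarying.potterBounded {b : ℝ → ℝ} (h : SlowlyVarying b) : PotterBounded b := by
  obtain ⟨-, hpos, h⟩ := h
  refine ⟨hpos, fun ε hε => ?_⟩
  obtain ⟨⟨g, hg, hgb⟩, k, hk, hkb⟩ := h ε hε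
  obtain ⟨C, hC, hinc⟩ := hgb.exists_le_mul
  obtain ⟨D, _, hdec⟩ := hkb.exists_le_mul
  refine ⟨max C D, lt_max_of_lt_left hC, fun s t hs ht => ?_⟩
  have hbt := hpos t ht
  rcases le_total s t with hst | hst
  · calc b s ≤ C * (t / s) ^ ε * b t :=
          le_mul_div_rpow_mul_of_rpow_mul_le hs ht (hinc s hs t ht (hg hs ht hst))
      _ ≤ max C D * symmRatio s t ^ ε * b t := by
        rw [symmRatio_of_le hs hst]; gcongr; exact le_max_left _ _
  · calc b s ≤ D * (t / s) ^ (-ε) * b t :=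
          le_mul_div_rpow_mul_of_rpow_mul_le hs ht (hdec s hs t ht (hk ht hs hst))
      _ = D * (s / t) ^ ε * b t := by
        rw [← inv_div, Real.inv_rpow (by positivity), Real.rpow_neg (by positivity), inv_inv]
      _ ≤ max C D * symmRatio s t ^ ε * b t := by
        rw [symmRatio_of_ge ht hst]; gcongr; exact le_max_right _ _

namespace PotterBounded

variable {a b S : ℝ → ℝ} {p δ : ℝ}

protected theorem mul (ha : PotterBounded a) (hb : PotterBounded b) :
    PotterBounded fun t => a t * b t := by
  refine ⟨fun t ht => mul_pos (ha.pos t ht) (hb.pos t ht), fun ε hε => ?_⟩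
  obtain ⟨C, hC, h1⟩ := ha.bound (ε / 2) (half_pos hε)
  obtain ⟨D, hD, h2⟩ := hb.bound (ε / 2) (half_pos hε)
  refine ⟨C * D, by positivity, fun s t hs ht => ?_⟩
  have hR := symmRatio_pos hs ht
  have hat := ha.pos t ht
  calc a s * b s
      ≤ (C * symmRatio s t ^ (ε / 2) * a t) * (D * symmRatio s t ^ (ε / 2) * b t) :=
        mul_le_mul (h1 s t hs ht) (h2 s t hs ht) (hb.pos s hs).le (by positivity)
    _ = C * D * (symmRatio s t ^ (ε / 2) * symmRatio s t ^ (ε / 2)) * (a t * b t) := by ring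
    _ = C * D * symmRatio s t ^ ε * (a t * b t) := by rw [← Real.rpow_add hR, add_halves]

protected theorem inv (hb : PotterBounded b) : PotterBounded fun t => (b t)⁻¹ := by
  refine ⟨fun t ht => inv_pos.2 (hb.pos t ht), fun ε hε => ?_⟩
  obtain ⟨C, hC, h⟩ := hb.bound ε hε
  refine ⟨C, hC, fun s t hs ht => ?_⟩
  have hbt := hb.pos t ht
  rw [inv_le_iff_one_le_mul₀ (hb.pos s hs)]
  calc 1 = (b t)⁻¹ * b t := (inv_mul_cancel₀ hbt.ne').symm
    _ ≤ (b t)⁻¹ * (C * symmRatio s t ^ ε * b s) := by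
      gcongr; rw [symmRatio_comm]; exact h t s ht hs
    _ = C * symmRatio s t ^ ε * (b t)⁻¹ * b s := by ring

protected theorem div (ha : PotterBounded a) (hb : PotterBounded b) :
    PotterBounded fun t => a t / b t := by
  simpa only [div_eq_mul_inv] using ha.mul hb.inv

protected theorem rpow (hb : PotterBounded b) (hp : 0 < p) : PotterBounded fun t => b t ^ p := by
  refine ⟨fun t ht => Real.rpow_pos_of_pos (hb.pos t ht) _, fun ε hε => ?_⟩
  obtain ⟨C, hC, h⟩ := hb.bound (ε / p) (div_pos hε hp)
  refine ⟨C ^ p, by positivity, fun s t hs ht => ?_⟩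
  have hR := symmRatio_pos hs ht
  calc b s ^ p ≤ (C * symmRatio s t ^ (ε / p) * b t) ^ p :=
        Real.rpow_le_rpow (hb.pos s hs).le (h s t hs ht) hp.le
    _ = C ^ p * symmRatio s t ^ ε * b t ^ p := by
      rw [Real.mul_rpow (by positivity) (hb.pos t ht).le, Real.mul_rpow hC.le (by positivity),
        ← Real.rpow_mul hR.le, div_mul_cancel₀ _ hp.ne']

theorem rpow_mul_pos (hS : PotterBounded S) {t : ℝ} (ht : 0 < t) : 0 < t ^ p * S t :=
  mul_pos (Real.rpow_pos_of_pos ht _) (hS.pos t ht)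

theorem exists_rpow_mul_le (hS : PotterBounded S) (p : ℝ) {ε : ℝ} (hε : 0 < ε) :
    ∃ C : ℝ, 0 < C ∧ ∀ s t, 0 < s → 0 < t →
      s ^ p * S s ≤ C * symmRatio s t ^ (|p| + ε) * (t ^ p * S t) := by
  obtain ⟨C, hC, h⟩ := hS.bound ε hε
  refine ⟨C, hC, fun s t hs ht => ?_⟩
  have hR := symmRatio_pos hs ht
  calc s ^ p * S s ≤ symmRatio s t ^ |p| * t ^ p * (C * symmRatio s t ^ ε * S t) :=
        mul_le_mul (rpow_le_symmRatio_rpow_abs_mul hs ht p) (h s t hs ht) (hS.pos s hs).le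
          (by positivity)
    _ = C * symmRatio s t ^ (|p| + ε) * (t ^ p * S t) := by rw [Real.rpow_add hR]; ring

theorem exists_symmRatio_rpow_mul_le (hS : PotterBounded S) (hδ : 0 < δ) :
    ∃ C : ℝ, 0 < C ∧ ∀ s t, 0 < s → 0 < t →
      symmRatio (s ^ δ * S s) (t ^ δ * S t) ≤ C * symmRatio s t ^ (2 * δ) := by
  obtain ⟨C, hC, h⟩ := hS.exists_rpow_mul_le δ hδ
  rw [abs_of_pos hδ, ← two_mul] at h
  refine ⟨C, hC, fun s t hs ht => ?_⟩
  refine symmRatio_le (hS.rpow_mul_pos hs) (hS.rpow_mul_pos ht) (h s t hs ht) ?_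
  rw [symmRatio_comm]
  exact h t s ht hs

protected theorem comp (ha : PotterBounded a) (hS : PotterBounded S) (hδ : 0 < δ) :
    PotterBounded fun t => a (t ^ δ * S t) := by
  refine ⟨fun t ht => ha.pos _ (hS.rpow_mul_pos ht), fun ε hε => ?_⟩
  obtain ⟨C, hC, hbound⟩ := ha.bound (ε / (2 * δ)) (by positivity)
  obtain ⟨D, hD, hratio⟩ := hS.exists_symmRatio_rpow_mul_le hδ
  refine ⟨C * D ^ (ε / (2 * δ)), by positivity, fun s t hs ht => ?_⟩
  have hs' := hS.rpow_mul_pos (p := δ) hs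
  have ht' := hS.rpow_mul_pos (p := δ) ht
  have hR := symmRatio_pos hs ht
  have hat := ha.pos _ ht'
  calc a (s ^ δ * S s)
      ≤ C * symmRatio (s ^ δ * S s) (t ^ δ * S t) ^ (ε / (2 * δ)) * a (t ^ δ * S t) :=
        hbound _ _ hs' ht'
    _ ≤ C * (D * symmRatio s t ^ (2 * δ)) ^ (ε / (2 * δ)) * a (t ^ δ * S t) := by
      have := (symmRatio_pos hs' ht').le
      gcongr
      exact hratio s t hs ht
    _ = C * D ^ (ε / (2 * δ)) * symmRatio s t ^ ε * a (t ^ δ * S t) := by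
      rw [Real.mul_rpow hD.le (by positivity), ← Real.rpow_mul hR.le,
        mul_div_cancel₀ ε (by positivity), ← mul_assoc C]

end PotterBounded

end PotterBounded

section ELpNorm

variable {α ι : Type*} [MeasurableSpace α] {μ : Measure α} {q c : ℝ≥0∞} {f g : α → ℝ≥0∞}

theorem eLpNorm_le_const_mul_of_ae_le (hc : c ≠ ∞) (h : ∀ᵐ x ∂μ, f x ≤ c * g x) :
    eLpNorm f q μ ≤ c * eLpNorm g q μ := by
  lift c to NNReal using hc
  exact eLpNorm_le_nnreal_smul_eLpNorm_of_ae_le_mul' h q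

theorem mul_eLpNorm_le (hq : q ≠ 0) (c : ℝ≥0∞) (f : α → ℝ≥0∞) :
    c * eLpNorm f q μ ≤ eLpNorm (fun x => c * f x) q μ := by
  rcases eq_or_ne q ∞ with rfl | hq'
  · simp only [eLpNorm_exponent_top]
    exact ENNReal.essSup_const_mul.ge
  have h := ENNReal.toReal_pos hq hq'
  simp only [eLpNorm_eq_lintegral_rpow_enorm_toReal hq hq', enorm_eq_self,
    ENNReal.mul_rpow_of_nonneg _ _ h.le]
  calc c * (∫⁻ x, f x ^ q.toReal ∂μ) ^ (1 / q.toReal)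
      = (c ^ q.toReal * ∫⁻ x, f x ^ q.toReal ∂μ) ^ (1 / q.toReal) := by
        rw [ENNReal.mul_rpow_of_nonneg _ _ (by positivity), ← ENNReal.rpow_mul,
          mul_one_div_cancel h.ne', ENNReal.rpow_one]
    _ ≤ (∫⁻ x, c ^ q.toReal * f x ^ q.toReal ∂μ) ^ (1 / q.toReal) := by
      gcongr
      exact lintegral_const_mul_le _ _

theorem eLpNorm_rpow_toReal (hq : q ≠ 0) (hq' : q ≠ ∞) (f : α → ℝ≥0∞) :
    eLpNorm f q μ ^ q.toReal = ∫⁻ x, f x ^ q.toReal ∂μ := by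
  simp only [eLpNorm_eq_lintegral_rpow_enorm_toReal hq hq', enorm_eq_self, one_div]
  exact ENNReal.rpow_inv_rpow (ENNReal.toReal_pos hq hq').ne' _

section Count

variable [MeasurableSpace ι] [MeasurableSingletonClass ι]

theorem eLpNorm_rpow_toReal_count (hq : q ≠ 0) (hq' : q ≠ ∞) (y : ι → ℝ≥0∞) :
    eLpNorm y q Measure.count ^ q.toReal = ∑' i, y i ^ q.toReal := by
  rw [eLpNorm_rpow_toReal hq hq', lintegral_count]

theorem eLpNorm_restrict_iUnion_le [Countable ι] (hq : q ≠ 0) (s : ι → Set α) (f : α → ℝ≥0∞) :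
    eLpNorm f q (μ.restrict (⋃ i, s i)) ≤
      eLpNorm (fun i => eLpNorm f q (μ.restrict (s i))) q Measure.count := by
  rcases eq_or_ne q ∞ with rfl | hq'
  · rw [eLpNorm_exponent_top, eLpNorm_exponent_top, eLpNormEssSup_count]
    refine essSup_le_of_ae_le _ ((ae_restrict_iUnion_iff s _).2 fun i => ?_)
    filter_upwards [ae_le_eLpNormEssSup (f := f) (μ := μ.restrict (s i))] with x hx
    exact hx.trans (le_iSup (fun i => eLpNorm f ∞ (μ.restrict (s i))) i)
  · rw [← ENNReal.rpow_le_rpow_iff (ENNReal.toReal_pos hq hq'), eLpNorm_rpow_toReal_count hq hq']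
    simpa only [eLpNorm_rpow_toReal hq hq'] using lintegral_iUnion_le s _

theorem eLpNorm_count_eLpNorm_restrict_le [Countable ι] (hq : q ≠ 0) {s : ι → Set α}
    (hs : ∀ i, MeasurableSet (s i)) (hd : Pairwise (Function.onFun Disjoint s)) (f : α → ℝ≥0∞) :
    eLpNorm (fun i => eLpNorm f q (μ.restrict (s i))) q Measure.count ≤ eLpNorm f q μ := by
  refine le_trans ?_ (eLpNorm_mono_measure f (Measure.restrict_le_self (s := ⋃ i, s i)))
  rcases eq_or_ne q ∞ with rfl | hq'
  · rw [eLpNorm_exponent_top, eLpNormEssSup_count]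
    exact iSup_le fun i => eLpNorm_mono_measure f (Measure.restrict_mono_set _ (subset_iUnion s i))
  · rw [← ENNReal.rpow_le_rpow_iff (ENNReal.toReal_pos hq hq'), eLpNorm_rpow_toReal_count hq hq']
    simp only [eLpNorm_rpow_toReal hq hq', lintegral_iUnion hs hd, le_refl]

end Count

theorem exists_eLpNorm_restrict_union_le (hq : q ≠ 0) : ∃ C : ℝ≥0∞, C ≠ ∞ ∧
    ∀ (s t : Set α) (f : α → ℝ≥0∞) (B : ℝ≥0∞), eLpNorm f q (μ.restrict s) ≤ B →
      eLpNorm f q (μ.restrict t) ≤ B → eLpNorm f q (μ.restrict (s ∪ t)) ≤ C * B := by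
  refine ⟨(Measure.count (univ : Set Bool)) ^ (1 / q.toReal),
    ENNReal.rpow_ne_top_of_nonneg (by positivity) (measure_ne_top _ _), fun s t f B hs ht => ?_⟩
  rw [union_eq_iUnion]
  refine (eLpNorm_restrict_iUnion_le hq _ f).trans ?_
  calc eLpNorm (fun i : Bool => eLpNorm f q (μ.restrict (cond i s t))) q Measure.count
      ≤ eLpNorm (fun _ : Bool => B) q Measure.count :=
        eLpNorm_mono_enorm (Bool.forall_bool.2 ⟨ht, hs⟩)
    _ = _ := by rw [eLpNorm_const B hq (NeZero.ne _), enorm_eq_self, mul_comm]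

theorem tsum_pow_natAbs_ne_top {g : ℝ≥0∞} (hg : g < 1) : ∑' k : ℤ, g ^ k.natAbs ≠ ∞ := by
  have hgeom : ∑' n : ℕ, g ^ n ≠ ∞ := by
    rw [ENNReal.tsum_geometric]
    exact ENNReal.inv_ne_top.2 (tsub_pos_of_lt hg).ne'
  have hneg : ∑' n : ℕ, g ^ (n + 1) ≠ ∞ :=
    ne_top_of_le_ne_top hgeom (ENNReal.tsum_comp_le_tsum_of_injective (add_left_injective 1) _)
  rw [tsum_of_nat_of_neg_add_one ENNReal.summable ENNReal.summable]
  have habs (n : ℕ) : (-((n : ℤ) + 1)).natAbs = n + 1 := by omega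
  simpa only [Int.natAbs_natCast, habs] using ENNReal.add_ne_top.2 ⟨hgeom, hneg⟩

theorem exists_eLpNorm_iSup_pow_natAbs_mul_le (hq : q ≠ 0) {g : ℝ≥0∞} (hg : g < 1) :
    ∃ C : ℝ≥0∞, C ≠ ∞ ∧ ∀ x : ℤ → ℝ≥0∞,
      eLpNorm (fun k => ⨆ j : ℤ, g ^ (k - j).natAbs * x j) q Measure.count ≤
        C * eLpNorm x q Measure.count := by
  rcases eq_or_ne q ∞ with rfl | hq'
  · refine ⟨1, one_ne_top, fun x => ?_⟩
    simp only [eLpNorm_exponent_top, eLpNormEssSup_count, enorm_eq_self, one_mul]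
    exact iSup_le fun k => iSup_mono fun j => mul_le_of_le_one_left' (pow_le_one' hg.le _)
  have hpos := ENNReal.toReal_pos hq hq'
  have hsum := tsum_pow_natAbs_ne_top (ENNReal.rpow_lt_one hg hpos)
  refine ⟨(∑' m : ℤ, (g ^ q.toReal) ^ m.natAbs) ^ (1 / q.toReal),
    ENNReal.rpow_ne_top_of_nonneg (by positivity) hsum, fun x => ?_⟩
  rw [← ENNReal.rpow_le_rpow_iff hpos, ENNReal.mul_rpow_of_nonneg _ _ hpos.le,
    eLpNorm_rpow_toReal_count hq hq', eLpNorm_rpow_toReal_count hq hq', one_div,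
    ENNReal.rpow_inv_rpow hpos.ne']
  have hterm (k j : ℤ) : (g ^ (k - j).natAbs * x j) ^ q.toReal =
      (g ^ q.toReal) ^ (k - j).natAbs * x j ^ q.toReal := by
    rw [ENNReal.mul_rpow_of_nonneg _ _ hpos.le, ← ENNReal.rpow_natCast, ← ENNReal.rpow_natCast,
      ← ENNReal.rpow_mul, ← ENNReal.rpow_mul, mul_comm q.toReal]
  calc ∑' k : ℤ, (⨆ j : ℤ, g ^ (k - j).natAbs * x j) ^ q.toReal
      ≤ ∑' (k : ℤ) (j : ℤ), (g ^ q.toReal) ^ (k - j).natAbs * x j ^ q.toReal := by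
        refine ENNReal.tsum_le_tsum fun k => ?_
        rw [← ENNReal.le_rpow_inv_iff hpos]
        refine iSup_le fun j => (ENNReal.le_rpow_inv_iff hpos).2 ?_
        rw [hterm]
        exact ENNReal.le_tsum j
    _ = ∑' (j : ℤ) (k : ℤ), (g ^ q.toReal) ^ (k - j).natAbs * x j ^ q.toReal := ENNReal.tsum_comm
    _ = (∑' m : ℤ, (g ^ q.toReal) ^ m.natAbs) * ∑' j : ℤ, x j ^ q.toReal := by
      rw [← ENNReal.tsum_mul_left]
      refine tsum_congr fun j => ?_
      rw [ENNReal.tsum_mul_right]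
      exact congrArg (· * _) ((Equiv.subRight j).tsum_eq fun m : ℤ => (g ^ q.toReal) ^ m.natAbs)

end ELpNorm

section LogMeasure

variable {q : ℝ≥0∞} {s t : ℝ}

/-- The measure `dt / t` on `(0, ∞)`: Lebesgue measure in the variable `log t`. The weights
`u ^ (-1 / q)` of the interpolation norms are absorbed into it. -/
def logMeasure : Measure ℝ :=
  (volume.restrict (Ioi 0)).withDensity fun t => ENNReal.ofReal t⁻¹

theorem measurable_ofReal_inv : Measurable fun t : ℝ => ENNReal.ofReal t⁻¹ :=
  measurable_inv.ennreal_ofReal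

theorem logMeasure_restrict {A : Set ℝ} (hA : MeasurableSet A) (hA0 : A ⊆ Ioi 0) :
    logMeasure.restrict A = (volume.restrict A).withDensity fun t => ENNReal.ofReal t⁻¹ := by
  rw [logMeasure, restrict_withDensity hA, Measure.restrict_restrict hA, inter_eq_left.2 hA0]

theorem restrict_Ioi_logMeasure : logMeasure.restrict (Ioi 0) = logMeasure :=
  logMeasure_restrict measurableSet_Ioi subset_rfl

theorem ae_logMeasure_pos : ∀ᵐ t ∂logMeasure, 0 < t :=
  withDensity_absolutelyContinuous _ _ (ae_restrict_mem measurableSet_Ioi)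

theorem logMeasure_Ico (hs : 0 < s) (hst : s ≤ t) :
    logMeasure (Ico s t) = ENNReal.ofReal (Real.log (t / s)) := by
  have hpos : ∀ u ∈ Ico s t, 0 < u := fun u hu => hs.trans_le hu.1
  rw [← Measure.restrict_apply_self, logMeasure_restrict measurableSet_Ico hpos,
    withDensity_apply _ measurableSet_Ico, Measure.restrict_restrict measurableSet_Ico, inter_self,
    ← integral_inv_of_pos hs (hs.trans_le hst), intervalIntegral.integral_of_le hst,
    ← integral_Ico_eq_integral_Ioc, ofReal_integral_eq_lintegral_ofReal]
  · exact (continuousOn_inv₀.mono fun u hu => (hs.trans_le hu.1).ne').integrableOn_Icc.mono_set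
      Ico_subset_Icc_self
  · exact (ae_restrict_iff' measurableSet_Ico).2
      (ae_of_all _ fun u hu => (inv_pos.2 (hpos u hu)).le)

theorem ae_withDensity_ofReal_inv_iff {A : Set ℝ} (hA : MeasurableSet A) (hA0 : A ⊆ Ioi 0)
    {p : ℝ → Prop} :
    (∀ᵐ t ∂(volume.restrict A).withDensity fun t => ENNReal.ofReal t⁻¹, p t) ↔
      ∀ᵐ t ∂volume.restrict A, p t := by
  rw [ae_withDensity_iff measurable_ofReal_inv, ae_restrict_iff' hA, ae_restrict_iff' hA]
  refine eventually_congr (ae_of_all _ fun t => forall_congr' fun ht => ?_)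
  have hpos : ENNReal.ofReal t⁻¹ ≠ 0 := (ENNReal.ofReal_pos.2 (inv_pos.2 (hA0 ht))).ne'
  exact ⟨fun h => h hpos, fun h _ => h⟩

theorem LqNorm_congr {A : Set ℝ} (hA : MeasurableSet A) {g g' : ℝ → ℝ≥0∞} (h : EqOn g g' A) :
    LqNorm q A g = LqNorm q A g' := by
  unfold LqNorm
  split_ifs
  · exact essSup_congr_ae ((ae_restrict_iff' hA).2 (ae_of_all _ h))
  · rw [setLIntegral_congr_fun hA fun t ht => congrArg (· ^ q.toReal) (h ht)]

theorem LqNorm_eq_eLpNorm_logMeasure (hq : q ≠ 0) {A : Set ℝ} (hA : MeasurableSet A)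
    (hA0 : A ⊆ Ioi 0) {g F : ℝ → ℝ≥0∞}
    (hg : ∀ u ∈ A, g u = ENNReal.ofReal (u ^ (-(q⁻¹.toReal))) * F u) :
    LqNorm q A g = eLpNorm F q (logMeasure.restrict A) := by
  rw [LqNorm_congr hA hg, logMeasure_restrict hA hA0, LqNorm]
  split_ifs with hq'
  · subst hq'
    have hae : ae ((volume.restrict A).withDensity fun t => ENNReal.ofReal t⁻¹) =
        ae (volume.restrict A) := Filter.ext fun _ => ae_withDensity_ofReal_inv_iff hA hA0
    simp [eLpNormEssSup, essSup, hae]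
  have hpos := ENNReal.toReal_pos hq hq'
  rw [eLpNorm_eq_lintegral_rpow_enorm_toReal hq hq',
    lintegral_withDensity_eq_lintegral_mul_non_measurable _ measurable_ofReal_inv
      (ae_of_all _ fun _ => ofReal_lt_top), ENNReal.toReal_inv, one_div]
  congr 1
  refine setLIntegral_congr_fun hA fun u hu => ?_
  have hu0 : 0 < u := hA0 hu
  simp only [Pi.mul_apply, enorm_eq_self]
  rw [ENNReal.mul_rpow_of_nonneg _ _ hpos.le, ENNReal.ofReal_rpow_of_pos (by positivity),
    ← Real.rpow_mul hu0.le, neg_mul, inv_mul_cancel₀ hpos.ne', Real.rpow_neg_one]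

end LogMeasure

section Tempered

variable {C D q : ℝ≥0∞} {k l : ℝ} {F G : ℝ → ℝ≥0∞}

/-- `F` varies at most polynomially: `F s ≤ C * symmRatio s t ^ k * F t` for all positive `s`, `t`.
Norms in `dt / t` of such functions can be computed along lacunary sequences. -/
def IsTempered (C : ℝ≥0∞) (k : ℝ) (F : ℝ → ℝ≥0∞) : Prop :=
  ∀ s t, 0 < s → 0 < t → F s ≤ C * ENNReal.ofReal (symmRatio s t ^ k) * F t

theorem PotterBounded.exists_isTempered {b : ℝ → ℝ} (hb : PotterBounded b) (p : ℝ) :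
    ∃ C : ℝ≥0∞, C ≠ ∞ ∧ IsTempered C (|p| + 1) fun t => ENNReal.ofReal (t ^ p * b t) := by
  obtain ⟨C, hC, h⟩ := hb.exists_rpow_mul_le p one_pos
  refine ⟨ENNReal.ofReal C, ofReal_ne_top, fun s t hs ht => ?_⟩
  have := (symmRatio_pos hs ht).le
  rw [← ENNReal.ofReal_mul hC.le, ← ENNReal.ofReal_mul (by positivity)]
  exact ENNReal.ofReal_le_ofReal (h s t hs ht)

theorem isTempered_symmRatio_rpow_neg {κ t : ℝ} (hκ : 0 ≤ κ) (ht : 0 < t) :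
    IsTempered 1 κ fun u => ENNReal.ofReal (symmRatio u t ^ (-κ)) := by
  intro s u hs hu
  have hst := symmRatio_pos hs ht
  have hut := symmRatio_pos hu ht
  have hsu := symmRatio_pos hs hu
  rw [one_mul, ← ENNReal.ofReal_mul (by positivity)]
  refine ENNReal.ofReal_le_ofReal ?_
  rw [Real.rpow_neg hst.le, Real.rpow_neg hut.le, ← div_eq_mul_inv, le_div_iff₀ (by positivity),
    inv_mul_le_iff₀ (by positivity), ← Real.mul_rpow hst.le hsu.le, symmRatio_comm s u, mul_comm]
  exact Real.rpow_le_rpow hut.le (symmRatio_le_mul hu hs ht) hκ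

namespace IsTempered

protected theorem mul (hF : IsTempered C k F) (hG : IsTempered D l G) :
    IsTempered (C * D) (k + l) fun t => F t * G t := by
  intro s t hs ht
  have hR := symmRatio_pos hs ht
  calc F s * G s
      ≤ C * ENNReal.ofReal (symmRatio s t ^ k) * F t *
          (D * ENNReal.ofReal (symmRatio s t ^ l) * G t) :=
        mul_le_mul' (hF s t hs ht) (hG s t hs ht)
    _ = C * D * (ENNReal.ofReal (symmRatio s t ^ k) * ENNReal.ofReal (symmRatio s t ^ l)) *
          (F t * G t) := by ring
    _ = C * D * ENNReal.ofReal (symmRatio s t ^ (k + l)) * (F t * G t) := by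
      rw [← ENNReal.ofReal_mul (by positivity), ← Real.rpow_add hR]

theorem le_of_symmRatio_le (hF : IsTempered C k F) (hk : 0 ≤ k) {s t L : ℝ} (hs : 0 < s)
    (ht : 0 < t) (hL : symmRatio s t ≤ L) : F s ≤ C * ENNReal.ofReal (L ^ k) * F t := by
  refine (hF s t hs ht).trans ?_
  gcongr
  exact (symmRatio_pos hs ht).le

theorem exists_comp_rpow_mul {S : ℝ → ℝ} (hS : PotterBounded S) {δ : ℝ} (hδ : 0 < δ)
    (hC : C ≠ ∞) (hk : 0 ≤ k) : ∃ D : ℝ≥0∞, D ≠ ∞ ∧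
      ∀ F, IsTempered C k F → IsTempered D (2 * δ * k) fun t => F (t ^ δ * S t) := by
  obtain ⟨B, hB, h⟩ := hS.exists_symmRatio_rpow_mul_le hδ
  refine ⟨C * ENNReal.ofReal (B ^ k), ENNReal.mul_ne_top hC ofReal_ne_top,
    fun F hF s t hs ht => ?_⟩
  have hR := (symmRatio_pos hs ht).le
  refine (hF.le_of_symmRatio_le hk (hS.rpow_mul_pos hs) (hS.rpow_mul_pos ht)
    (h s t hs ht)).trans_eq ?_
  rw [Real.mul_rpow hB.le (by positivity), ENNReal.ofReal_mul (by positivity), ← Real.rpow_mul hR,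
    ← mul_assoc C]

theorem exists_le_mul_eLpNorm_Ico (hq : q ≠ 0) (hC : C ≠ ∞) (hk : 0 ≤ k) :
    ∃ D : ℝ≥0∞, D ≠ ∞ ∧ ∀ F, IsTempered C k F → ∀ s t, 0 < s → s ≤ 2 * t → t ≤ 2 * s →
      F t ≤ D * eLpNorm F q (logMeasure.restrict (Ico s (2 * s))) := by
  set v := ENNReal.ofReal (Real.log 2) ^ (1 / q.toReal)
  have hv0 : v ≠ 0 := (ENNReal.rpow_pos (by simp [Real.log_pos]) ofReal_ne_top).ne'
  have hv : v ≠ ∞ := ENNReal.rpow_ne_top_of_nonneg (by positivity) ofReal_ne_top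
  refine ⟨v⁻¹ * (C * ENNReal.ofReal (4 ^ k)), ENNReal.mul_ne_top (ENNReal.inv_ne_top.2 hv0)
    (ENNReal.mul_ne_top hC ofReal_ne_top), fun F hF s t hs hst hts => ?_⟩
  have hblock : logMeasure (Ico s (2 * s)) = ENNReal.ofReal (Real.log 2) := by
    rw [logMeasure_Ico hs (by linarith), mul_div_cancel_right₀ _ hs.ne']
  have hne : logMeasure.restrict (Ico s (2 * s)) ≠ 0 := by
    rw [Ne, Measure.restrict_eq_zero, hblock]
    simp [Real.log_pos]
  have hconst : F t * v ≤
      C * ENNReal.ofReal (4 ^ k) * eLpNorm F q (logMeasure.restrict (Ico s (2 * s))) := by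
    calc F t * v = eLpNorm (fun _ => F t) q (logMeasure.restrict (Ico s (2 * s))) := by
          rw [eLpNorm_const _ hq hne, Measure.restrict_apply_univ, hblock, enorm_eq_self]
      _ ≤ _ := eLpNorm_le_const_mul_of_ae_le (ENNReal.mul_ne_top hC ofReal_ne_top)
        ((ae_restrict_iff' measurableSet_Ico).2 (ae_of_all _ fun u hu => ?_))
    have ht : 0 < t := by linarith
    exact hF.le_of_symmRatio_le hk ht (hs.trans_le hu.1)
      (symmRatio_le ht (hs.trans_le hu.1) (by linarith [hu.1]) (by linarith [hu.2]))
  rw [mul_assoc]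
  calc F t = v⁻¹ * (F t * v) := by
        rw [mul_comm (F t), ← mul_assoc, ENNReal.inv_mul_cancel hv0 hv, one_mul]
    _ ≤ _ := by gcongr

end IsTempered

end Tempered

section Lacunary

variable {C q : ℝ≥0∞} {k M : ℝ} {ρ : ℤ → ℝ}

/-- A two-sided lacunary sequence of positive reals with consecutive ratios in `[2, M]`. -/
structure Lacunary (M : ℝ) (ρ : ℤ → ℝ) : Prop where
  pos : ∀ k, 0 < ρ k
  two_mul_le : ∀ k, 2 * ρ k ≤ ρ (k + 1)
  le_mul : ∀ k, ρ (k + 1) ≤ M * ρ k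

theorem lacunary_mul_zpow {t l : ℝ} (ht : 0 < t) (hl : 2 ≤ l) : Lacunary l fun k => t * l ^ k := by
  have hl0 : 0 < l := two_pos.trans_le hl
  have hsucc (k : ℤ) : t * l ^ (k + 1) = l * (t * l ^ k) := by
    rw [zpow_add_one₀ hl0.ne']; ring
  exact ⟨fun k => by positivity, fun k => by rw [hsucc]; gcongr, fun k => (hsucc k).le⟩

namespace Lacunary

protected theorem strictMono (h : Lacunary M ρ) : StrictMono ρ :=
  strictMono_int_of_lt_succ fun k => by linarith [h.pos k, h.two_mul_le k]

theorem pow_two_mul_le (h : Lacunary M ρ) (n : ℕ) (k : ℤ) : 2 ^ n * ρ k ≤ ρ (k + n) := by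
  induction n with
  | zero => simp
  | succ n ih =>
    calc 2 ^ (n + 1) * ρ k = 2 * (2 ^ n * ρ k) := by ring
      _ ≤ 2 * ρ (k + n) := by gcongr
      _ ≤ ρ (k + n + 1) := h.two_mul_le _
      _ = ρ (k + (n + 1 : ℕ)) := by push_cast; rw [add_assoc]

theorem exists_mem_Ico (h : Lacunary M ρ) {u : ℝ} (hu : 0 < u) :
    ∃ k, u ∈ Ico (ρ k) (ρ (k + 1)) := by
  obtain ⟨n, hn⟩ : ∃ n : ℕ, ρ (-n) ≤ u := by
    obtain ⟨n, hn⟩ := pow_unbounded_of_one_lt (ρ 0 / u) one_lt_two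
    have h0 := h.pow_two_mul_le n (-n)
    rw [neg_add_cancel] at h0
    rw [div_lt_iff₀ hu] at hn
    exact ⟨n, (lt_of_mul_lt_mul_left (h0.trans_lt hn) (by positivity)).le⟩
  obtain ⟨m, hm⟩ : ∃ m : ℕ, u < ρ m := by
    obtain ⟨m, hm⟩ := pow_unbounded_of_one_lt (u / ρ 0) one_lt_two
    have h0 := h.pow_two_mul_le m 0
    rw [zero_add] at h0
    rw [div_lt_iff₀ (h.pos 0)] at hm
    exact ⟨m, hm.trans_le h0⟩
  obtain ⟨k, hk, hmax⟩ := Int.exists_greatest_of_bdd (P := fun k => ρ k ≤ u)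
    ⟨m, fun z hz => (h.strictMono.lt_iff_lt.1 (hz.trans_lt hm)).le⟩ ⟨_, hn⟩
  exact ⟨k, hk, not_le.1 fun hle => by linarith [hmax _ hle]⟩

theorem iUnion_Ico (h : Lacunary M ρ) : ⋃ k, Ico (ρ k) (ρ (k + 1)) = Ioi 0 := by
  refine subset_antisymm (iUnion_subset fun k u hu => (h.pos k).trans_le hu.1) fun u hu => ?_
  exact mem_iUnion.2 (h.exists_mem_Ico hu)

theorem symmRatio_le {u : ℝ} {k : ℤ} (h : Lacunary M ρ) (hu : u ∈ Ico (ρ k) (ρ (k + 1))) :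
    symmRatio u (ρ k) ≤ M := by
  rw [symmRatio_of_ge (h.pos k) hu.1, div_le_iff₀ (h.pos k)]
  exact hu.2.le.trans (h.le_mul k)

theorem exists_eLpNorm_le_eLpNorm_count (M : ℝ) (hq : q ≠ 0) (hC : C ≠ ∞) (hk : 0 ≤ k) :
    ∃ D : ℝ≥0∞, D ≠ ∞ ∧ ∀ ρ F, Lacunary M ρ → IsTempered C k F →
      eLpNorm F q logMeasure ≤ D * eLpNorm (fun j => F (ρ j)) q Measure.count := by
  set v := ENNReal.ofReal (Real.log M) ^ (1 / q.toReal)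
  have hv : v ≠ ∞ := ENNReal.rpow_ne_top_of_nonneg (by positivity) ofReal_ne_top
  have hD : C * ENNReal.ofReal (M ^ k) * v ≠ ∞ :=
    ENNReal.mul_ne_top (ENNReal.mul_ne_top hC ofReal_ne_top) hv
  refine ⟨C * ENNReal.ofReal (M ^ k) * v, hD, fun ρ F h hF => ?_⟩
  rw [← restrict_Ioi_logMeasure, ← h.iUnion_Ico]
  refine (eLpNorm_restrict_iUnion_le hq _ F).trans
    (eLpNorm_le_const_mul_of_ae_le hD (ae_of_all _ fun j => ?_))
  have hlt := h.strictMono (lt_add_one j)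
  have hvol : logMeasure (Ico (ρ j) (ρ (j + 1))) ≤ ENNReal.ofReal (Real.log M) := by
    rw [logMeasure_Ico (h.pos j) hlt.le]
    gcongr
    · exact div_pos (h.pos _) (h.pos j)
    · exact (div_le_iff₀ (h.pos j)).2 (h.le_mul j)
  have hne : logMeasure.restrict (Ico (ρ j) (ρ (j + 1))) ≠ 0 := by
    rw [Ne, Measure.restrict_eq_zero, logMeasure_Ico (h.pos j) hlt.le, ENNReal.ofReal_eq_zero,
      not_le]
    exact Real.log_pos ((one_lt_div (h.pos j)).2 hlt)
  calc eLpNorm F q (logMeasure.restrict (Ico (ρ j) (ρ (j + 1))))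
      ≤ eLpNorm (fun _ => C * ENNReal.ofReal (M ^ k) * F (ρ j)) q
          (logMeasure.restrict (Ico (ρ j) (ρ (j + 1)))) :=
        eLpNorm_mono_enorm_ae ((ae_restrict_iff' measurableSet_Ico).2 (ae_of_all _ fun u hu =>
          hF.le_of_symmRatio_le hk ((h.pos j).trans_le hu.1) (h.pos j) (h.symmRatio_le hu)))
    _ ≤ C * ENNReal.ofReal (M ^ k) * F (ρ j) * v := by
      rw [eLpNorm_const _ hq hne, Measure.restrict_apply_univ, enorm_eq_self]
      gcongr C * _ * _ * ?_
      exact ENNReal.rpow_le_rpow hvol (by positivity)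
    _ = C * ENNReal.ofReal (M ^ k) * v * F (ρ j) := by ring

theorem exists_eLpNorm_count_le_eLpNorm (h : Lacunary M ρ) (hq : q ≠ 0) (hC : C ≠ ∞)
    (hk : 0 ≤ k) : ∃ D : ℝ≥0∞, D ≠ ∞ ∧ ∀ F, IsTempered C k F →
      eLpNorm (fun j => F (ρ j)) q Measure.count ≤ D * eLpNorm F q logMeasure := by
  obtain ⟨D, hD, hblock⟩ := IsTempered.exists_le_mul_eLpNorm_Ico hq hC hk
  refine ⟨D, hD, fun F hF => ?_⟩
  have hdisj : Pairwise (Function.onFun Disjoint fun j => Ico (ρ j) (ρ (j + 1))) :=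
    h.strictMono.monotone.pairwise_disjoint_on_Ico_succ
  calc eLpNorm (fun j => F (ρ j)) q Measure.count
      ≤ D * eLpNorm (fun j => eLpNorm F q (logMeasure.restrict (Ico (ρ j) (ρ (j + 1))))) q
          Measure.count := by
        refine eLpNorm_le_const_mul_of_ae_le hD (ae_of_all _ fun j => ?_)
        have hj := h.pos j
        refine (hblock F hF _ _ hj (by linarith) (by linarith)).trans ?_
        gcongr D * ?_
        exact eLpNorm_mono_measure F
          (Measure.restrict_mono_set _ (Ico_subset_Ico_right (h.two_mul_le j)))
    _ ≤ D * eLpNorm F q logMeasure := by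
      gcongr D * ?_
      exact eLpNorm_count_eLpNorm_restrict_le hq (fun _ => measurableSet_Ico) hdisj F

end Lacunary

end Lacunary

section Maximal

variable {C q : ℝ≥0∞} {k κ δ : ℝ}

theorem ofReal_rpow_neg_two_lt_one (hκ : 0 < κ) : ENNReal.ofReal (2 ^ (-κ)) < 1 := by
  rw [ENNReal.ofReal_lt_one]
  exact Real.rpow_lt_one_of_one_lt_of_neg one_lt_two (neg_lt_zero.2 hκ)

theorem ofReal_symmRatio_two_zpow_rpow_neg (κ : ℝ) (i j : ℤ) :
    ENNReal.ofReal (symmRatio (2 ^ i) (2 ^ j) ^ (-κ)) =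
      ENNReal.ofReal (2 ^ (-κ)) ^ (j - i).natAbs := by
  rw [symmRatio_zpow one_le_two, ← ENNReal.ofReal_pow (by positivity), ← Real.rpow_natCast,
    ← Real.rpow_natCast, ← Real.rpow_mul two_pos.le, ← Real.rpow_mul two_pos.le, mul_comm (-κ)]

theorem exists_eLpNorm_symmRatio_rpow_neg_le (hq : q ≠ 0) (hκ : 0 < κ) :
    ∃ C : ℝ≥0∞, C ≠ ∞ ∧ ∀ t, 0 < t →
      eLpNorm (fun u => ENNReal.ofReal (symmRatio u t ^ (-κ))) q logMeasure ≤ C := by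
  obtain ⟨C, hC, hmax⟩ :=
    exists_eLpNorm_iSup_pow_natAbs_mul_le hq (ofReal_rpow_neg_two_lt_one hκ)
  obtain ⟨D, hD, hsum⟩ := Lacunary.exists_eLpNorm_le_eLpNorm_count 2 hq one_ne_top hκ.le
  refine ⟨D * C, ENNReal.mul_ne_top hD hC, fun t ht => ?_⟩
  have hdelta : eLpNorm (({0} : Set ℤ).indicator fun _ => (1 : ℝ≥0∞)) q Measure.count ≤ 1 := by
    simpa using eLpNorm_indicator_const_le (μ := Measure.count) (s := ({0} : Set ℤ)) (1 : ℝ≥0∞) q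
  have hcount : eLpNorm (fun j : ℤ => ENNReal.ofReal (2 ^ (-κ)) ^ j.natAbs) q Measure.count ≤ C :=
    calc _ ≤ eLpNorm (fun j : ℤ => ⨆ i : ℤ, ENNReal.ofReal (2 ^ (-κ)) ^ (j - i).natAbs *
              ({0} : Set ℤ).indicator (fun _ => (1 : ℝ≥0∞)) i) q Measure.count :=
          eLpNorm_mono_enorm fun j => le_iSup_of_le 0 (by simp)
      _ ≤ C * 1 := (hmax _).trans (mul_le_mul_right hdelta C)
      _ = C := mul_one C
  refine (hsum _ _ (lacunary_mul_zpow ht le_rfl) (isTempered_symmRatio_rpow_neg hκ.le ht)).trans ?_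
  have hR (j : ℤ) : symmRatio (t * 2 ^ j) t = symmRatio (2 ^ (0 : ℤ)) (2 ^ j) := by
    rw [symmRatio_comm, symmRatio, symmRatio, zpow_zero]
    congr 1 <;> field_simp
  simp only [hR, ofReal_symmRatio_two_zpow_rpow_neg, sub_zero]
  gcongr

theorem PotterBounded.exists_eLpNorm_mul_symmRatio_rpow_neg_le {b : ℝ → ℝ} (hb : PotterBounded b)
    (hq : q ≠ 0) (hκ : 0 < κ) :
    ∃ C : ℝ≥0∞, C ≠ ∞ ∧ ∀ t, 0 < t →
      eLpNorm (fun u => ENNReal.ofReal (b u * symmRatio u t ^ (-κ))) q logMeasure ≤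
        C * ENNReal.ofReal (b t) := by
  obtain ⟨B, hB, hbound⟩ := hb.bound (κ / 2) (half_pos hκ)
  obtain ⟨C, hC, hbump⟩ := exists_eLpNorm_symmRatio_rpow_neg_le hq (half_pos hκ)
  refine ⟨ENNReal.ofReal B * C, ENNReal.mul_ne_top ofReal_ne_top hC, fun t ht => ?_⟩
  have hpt : ∀ᵐ u ∂logMeasure, ENNReal.ofReal (b u * symmRatio u t ^ (-κ)) ≤
      ENNReal.ofReal (B * b t) * ENNReal.ofReal (symmRatio u t ^ (-(κ / 2))) := by
    filter_upwards [ae_logMeasure_pos] with u hu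
    have hR := symmRatio_pos hu ht
    have hbt := hb.pos t ht
    rw [← ENNReal.ofReal_mul (by positivity)]
    refine ENNReal.ofReal_le_ofReal ?_
    calc b u * symmRatio u t ^ (-κ)
        ≤ B * symmRatio u t ^ (κ / 2) * b t * symmRatio u t ^ (-κ) := by
          gcongr; exact hbound u t hu ht
      _ = B * b t * (symmRatio u t ^ (κ / 2) * symmRatio u t ^ (-κ)) := by ring
      _ = B * b t * symmRatio u t ^ (-(κ / 2)) := by rw [← Real.rpow_add hR]; congr 2; ring
  calc _ ≤ ENNReal.ofReal (B * b t) *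
          eLpNorm (fun u => ENNReal.ofReal (symmRatio u t ^ (-(κ / 2)))) q logMeasure :=
        eLpNorm_le_const_mul_of_ae_le ofReal_ne_top hpt
    _ ≤ ENNReal.ofReal B * ENNReal.ofReal (b t) * C := by
      rw [ENNReal.ofReal_mul hB.le]
      gcongr
      exact hbump t ht
    _ = ENNReal.ofReal B * C * ENNReal.ofReal (b t) := by ring

/-- A maximal function on the multiplicative line `(0, ∞)`: the supremum of `F` against the kernel
`symmRatio u t ^ (-κ)`. It bounds `F` at every point by its value at `t`, with a polynomial
loss. -/
def logMaximal (κ : ℝ) (F : ℝ → ℝ≥0∞) (t : ℝ) : ℝ≥0∞ :=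
  ⨆ u ∈ Ioi 0, ENNReal.ofReal (symmRatio u t ^ (-κ)) * F u

theorem symmRatio_rpow_neg_mul_le_logMaximal {u : ℝ} (hu : 0 < u) (κ : ℝ) (F : ℝ → ℝ≥0∞) (t : ℝ) :
    ENNReal.ofReal (symmRatio u t ^ (-κ)) * F u ≤ logMaximal κ F t :=
  le_iSup₂ (f := fun u (_ : u ∈ Ioi (0 : ℝ)) => ENNReal.ofReal (symmRatio u t ^ (-κ)) * F u) u hu

theorem le_symmRatio_rpow_mul_logMaximal {u t : ℝ} (hu : 0 < u) (ht : 0 < t) (κ : ℝ)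
    (F : ℝ → ℝ≥0∞) : F u ≤ ENNReal.ofReal (symmRatio u t ^ κ) * logMaximal κ F t := by
  have hR := symmRatio_pos hu ht
  calc F u = ENNReal.ofReal (symmRatio u t ^ κ) *
        (ENNReal.ofReal (symmRatio u t ^ (-κ)) * F u) := by
        rw [← mul_assoc, ← ENNReal.ofReal_mul (by positivity), ← Real.rpow_add hR, add_neg_cancel,
          Real.rpow_zero, ENNReal.ofReal_one, one_mul]
    _ ≤ _ := by gcongr; exact symmRatio_rpow_neg_mul_le_logMaximal hu κ F t

theorem isTempered_logMaximal (hκ : 0 ≤ κ) (F : ℝ → ℝ≥0∞) : IsTempered 1 κ (logMaximal κ F) := by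
  intro s t hs ht
  rw [one_mul]
  refine iSup₂_le fun u hu => ?_
  have hkernel := isTempered_symmRatio_rpow_neg hκ hu s t hs ht
  simp only [one_mul, symmRatio_comm _ u] at hkernel
  calc ENNReal.ofReal (symmRatio u s ^ (-κ)) * F u
      ≤ ENNReal.ofReal (symmRatio s t ^ κ) * ENNReal.ofReal (symmRatio u t ^ (-κ)) * F u := by
        gcongr
    _ = ENNReal.ofReal (symmRatio s t ^ κ) * (ENNReal.ofReal (symmRatio u t ^ (-κ)) * F u) :=
      mul_assoc _ _ _
    _ ≤ _ := by gcongr; exact symmRatio_rpow_neg_mul_le_logMaximal hu κ F t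

theorem IsTempered.exists_eLpNorm_logMaximal_le (hq : q ≠ 0) (hκ : 0 < κ) (hC : C ≠ ∞)
    (hk : 0 ≤ k) : ∃ D : ℝ≥0∞, D ≠ ∞ ∧ ∀ F, IsTempered C k F →
      eLpNorm (logMaximal κ F) q logMeasure ≤ D * eLpNorm F q logMeasure := by
  have hdyadic : Lacunary 2 fun j : ℤ => (2 : ℝ) ^ j := by
    simpa only [one_mul] using lacunary_mul_zpow one_pos le_rfl
  obtain ⟨D₁, hD₁, hto⟩ := Lacunary.exists_eLpNorm_le_eLpNorm_count 2 hq one_ne_top hκ.le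
  obtain ⟨D₂, hD₂, hmax⟩ :=
    exists_eLpNorm_iSup_pow_natAbs_mul_le hq (ofReal_rpow_neg_two_lt_one hκ)
  obtain ⟨D₃, hD₃, hback⟩ := hdyadic.exists_eLpNorm_count_le_eLpNorm hq hC hk
  set L := C * ENNReal.ofReal (2 ^ (κ + k))
  have hL : L ≠ ∞ := ENNReal.mul_ne_top hC ofReal_ne_top
  refine ⟨D₁ * (L * (D₂ * D₃)), ENNReal.mul_ne_top hD₁ (ENNReal.mul_ne_top hL
    (ENNReal.mul_ne_top hD₂ hD₃)), fun F hF => ?_⟩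
  have hpt (i : ℤ) : logMaximal κ F (2 ^ i) ≤
      L * ⨆ j : ℤ, ENNReal.ofReal (2 ^ (-κ)) ^ (i - j).natAbs * F (2 ^ j) := by
    refine iSup₂_le fun u hu => ?_
    obtain ⟨j, hj⟩ := hdyadic.exists_mem_Ico hu
    have hprod := (isTempered_symmRatio_rpow_neg hκ.le (hdyadic.pos i)).mul hF
    have hle := hprod.le_of_symmRatio_le (by positivity) hu (hdyadic.pos j)
      (hdyadic.symmRatio_le hj)
    simp only [one_mul, ofReal_symmRatio_two_zpow_rpow_neg] at hle
    refine hle.trans ?_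
    gcongr
    exact le_iSup (fun j : ℤ => ENNReal.ofReal (2 ^ (-κ)) ^ (i - j).natAbs * F (2 ^ j)) j
  calc eLpNorm (logMaximal κ F) q logMeasure
      ≤ D₁ * eLpNorm (fun i : ℤ => logMaximal κ F (2 ^ i)) q Measure.count :=
        hto _ _ hdyadic (isTempered_logMaximal hκ.le F)
    _ ≤ D₁ * (L * (D₂ * (D₃ * eLpNorm F q logMeasure))) := by
      gcongr
      exact (eLpNorm_le_const_mul_of_ae_le hL (ae_of_all _ hpt)).trans
        (mul_le_mul_right ((hmax _).trans (mul_le_mul_right (hback F hF) _)) _)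
    _ = _ := by ring

/-- `t ^ (δ / 2)` beats the slowly varying factor once the ratio `l` is large. -/
theorem PotterBounded.exists_lacunary_zpow {S : ℝ → ℝ} (hS : PotterBounded S) (hδ : 0 < δ) :
    ∃ l M : ℝ, 2 ≤ l ∧ Lacunary M fun j : ℤ => (l ^ j) ^ δ * S (l ^ j) := by
  obtain ⟨C, hC, hbound⟩ := hS.bound (δ / 2) (half_pos hδ)
  set l := max 2 ((2 * C) ^ (2 / δ))
  have hl : 2 ≤ l := le_max_left _ _
  have hl0 : 0 < l := two_pos.trans_le hl
  have hlC : 2 * C ≤ l ^ (δ / 2) := by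
    rw [← inv_div 2 δ, Real.le_rpow_inv_iff_of_pos (by positivity) hl0.le (by positivity)]
    exact le_max_right _ _
  have hlδ : l ^ δ = l ^ (δ / 2) * l ^ (δ / 2) := by rw [← Real.rpow_add hl0, add_halves]
  have hsucc (j : ℤ) : l ^ (j + 1) = l * l ^ j := by rw [zpow_add_one₀ hl0.ne', mul_comm]
  have hratio (j : ℤ) : symmRatio (l ^ j) (l * l ^ j) = l := by
    rw [← hsucc, symmRatio_zpow (one_le_two.trans hl)]; simp
  have hpow (j : ℤ) : (l ^ (j + 1)) ^ δ = l ^ δ * (l ^ j) ^ δ := by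
    rw [hsucc, Real.mul_rpow hl0.le (by positivity)]
  refine ⟨l, l ^ δ * (C * l ^ (δ / 2)), hl, fun j => hS.rpow_mul_pos (by positivity),
    fun j => ?_, fun j => ?_⟩
  · have h := hbound (l ^ j) (l * l ^ j) (by positivity) (by positivity)
    have hSpos := hS.pos (l * l ^ j) (by positivity)
    rw [hratio] at h
    rw [hpow, hsucc]
    calc 2 * ((l ^ j) ^ δ * S (l ^ j))
        ≤ 2 * ((l ^ j) ^ δ * (C * l ^ (δ / 2) * S (l * l ^ j))) := by gcongr
      _ = 2 * C * l ^ (δ / 2) * (l ^ j) ^ δ * S (l * l ^ j) := by ring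
      _ ≤ l ^ (δ / 2) * l ^ (δ / 2) * (l ^ j) ^ δ * S (l * l ^ j) := by gcongr
      _ = l ^ δ * (l ^ j) ^ δ * S (l * l ^ j) := by rw [hlδ]
  · have h := hbound (l * l ^ j) (l ^ j) (by positivity) (by positivity)
    rw [symmRatio_comm, hratio] at h
    rw [hpow, hsucc]
    calc l ^ δ * (l ^ j) ^ δ * S (l * l ^ j)
        ≤ l ^ δ * (l ^ j) ^ δ * (C * l ^ (δ / 2) * S (l ^ j)) := by gcongr
      _ = l ^ δ * (C * l ^ (δ / 2)) * ((l ^ j) ^ δ * S (l ^ j)) := by ring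

theorem IsTempered.exists_eLpNorm_comp_rpow_mul_le {S : ℝ → ℝ} (hS : PotterBounded S) (hδ : 0 < δ)
    (hq : q ≠ 0) (hC : C ≠ ∞) (hk : 0 ≤ k) :
    ∃ D : ℝ≥0∞, D ≠ ∞ ∧ ∀ F, IsTempered C k F →
      eLpNorm F q logMeasure ≤ D * eLpNorm (fun t => F (t ^ δ * S t)) q logMeasure ∧
      eLpNorm (fun t => F (t ^ δ * S t)) q logMeasure ≤ D * eLpNorm F q logMeasure := by
  obtain ⟨l, M, hl, hρ⟩ := hS.exists_lacunary_zpow hδ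
  have hgeom : Lacunary l fun j : ℤ => l ^ j := by
    simpa only [one_mul] using lacunary_mul_zpow one_pos hl
  obtain ⟨B, hB, hcomp⟩ := IsTempered.exists_comp_rpow_mul hS hδ hC hk
  have hk' : 0 ≤ 2 * δ * k := by positivity
  obtain ⟨D₁, hD₁, h₁⟩ := Lacunary.exists_eLpNorm_le_eLpNorm_count M hq hC hk
  obtain ⟨D₂, hD₂, h₂⟩ := hgeom.exists_eLpNorm_count_le_eLpNorm hq hB hk'
  obtain ⟨D₃, hD₃, h₃⟩ := Lacunary.exists_eLpNorm_le_eLpNorm_count l hq hB hk'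
  obtain ⟨D₄, hD₄, h₄⟩ := hρ.exists_eLpNorm_count_le_eLpNorm hq hC hk
  refine ⟨D₁ * D₂ + D₃ * D₄, ENNReal.add_ne_top.2 ⟨ENNReal.mul_ne_top hD₁ hD₂,
    ENNReal.mul_ne_top hD₃ hD₄⟩, fun F hF => ⟨?_, ?_⟩⟩
  · calc eLpNorm F q logMeasure
        ≤ D₁ * (D₂ * eLpNorm (fun t => F (t ^ δ * S t)) q logMeasure) :=
          (h₁ _ F hρ hF).trans (mul_le_mul_right (h₂ _ (hcomp F hF)) _)
      _ ≤ _ := by rw [← mul_assoc]; gcongr; exact le_self_add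
  · calc eLpNorm (fun t => F (t ^ δ * S t)) q logMeasure
        ≤ D₃ * (D₄ * eLpNorm F q logMeasure) :=
          (h₃ _ _ hgeom (hcomp F hF)).trans (mul_le_mul_right (h₄ F hF) _)
      _ ≤ _ := by rw [← mul_assoc]; gcongr; exact le_add_self

end Maximal

section KFunctional

variable {G : Type*} [AddCommGroup G] {N₀ N₁ : G → ℝ≥0∞} {q r : ℝ≥0∞}

/-- An even, quasi-subadditive, extended-real-valued functional on an additive group: the part of
the quasi-norm axioms on which the interpolation inequalities rest. -/
structure IsQuasiSeminorm (N : G → ℝ≥0∞) : Prop where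
  zero : N 0 = 0
  neg : ∀ x, N (-x) = N x
  quasi : ∃ C : ℝ≥0∞, C ≠ ∞ ∧ ∀ x y, N (x + y) ≤ C * (N x + N y)

theorem QuasiBanach.isQuasiSeminorm (A : QuasiBanach E) : IsQuasiSeminorm A.N where
  zero := A.zero
  neg x := by simpa using A.smul (-1) x
  quasi := let ⟨C, _, hC, h⟩ := A.quasi; ⟨C, hC, h⟩

theorem Kf_le (N₀ N₁ : G → ℝ≥0∞) (t : ℝ) (f g : G) :
    Kf N₀ N₁ t f ≤ N₀ g + ENNReal.ofReal t * N₁ (f - g) :=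
  iInf_le _ g

theorem Kf_le_left (h₁ : IsQuasiSeminorm N₁) (t : ℝ) (f : G) : Kf N₀ N₁ t f ≤ N₀ f := by
  simpa [h₁.zero] using Kf_le N₀ N₁ t f f

theorem Kf_le_right (h₀ : IsQuasiSeminorm N₀) (t : ℝ) (f : G) :
    Kf N₀ N₁ t f ≤ ENNReal.ofReal t * N₁ f := by
  simpa [h₀.zero] using Kf_le N₀ N₁ t f 0

theorem Kf_neg (h₀ : IsQuasiSeminorm N₀) (h₁ : IsQuasiSeminorm N₁) (t : ℝ) (f : G) :
    Kf N₀ N₁ t (-f) = Kf N₀ N₁ t f := by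
  refine (Equiv.neg G).iInf_congr fun g => ?_
  rw [Equiv.neg_apply, h₀.neg, sub_neg_eq_add, ← h₁.neg, neg_add']

theorem isTempered_Kf (N₀ N₁ : G → ℝ≥0∞) (f : G) : IsTempered 1 1 fun t => Kf N₀ N₁ t f := by
  intro s t hs ht
  have hR := symmRatio_pos hs ht
  have hR0 := (ENNReal.ofReal_pos.2 hR).ne'
  simp only [one_mul, Real.rpow_one, Kf, ENNReal.mul_iInf_of_ne hR0 ofReal_ne_top]
  refine iInf_mono fun g => ?_
  rw [mul_add, ← mul_assoc, ← ENNReal.ofReal_mul hR.le]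
  refine add_le_add (le_mul_of_one_le_left' ?_) (mul_le_mul_left (ENNReal.ofReal_le_ofReal ?_) _)
  · exact ENNReal.one_le_ofReal.2 (one_le_symmRatio hs ht)
  · exact (div_le_iff₀ ht).1 (le_max_left _ _)

theorem IsQuasiSeminorm.exists_Kf_add_le (h₀ : IsQuasiSeminorm N₀) (h₁ : IsQuasiSeminorm N₁) :
    ∃ C : ℝ≥0∞, C ≠ ∞ ∧ ∀ t f g, Kf N₀ N₁ t (f + g) ≤ C * (Kf N₀ N₁ t f + Kf N₀ N₁ t g) := by
  obtain ⟨C₀, hC₀, h₀⟩ := h₀.quasi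
  obtain ⟨C₁, hC₁, h₁⟩ := h₁.quasi
  set C := max 1 (max C₀ C₁)
  have hC : C ≠ ∞ := by simp [C, hC₀, hC₁]
  have hC0 : C ≠ 0 := (one_pos.trans_le (le_max_left _ _)).ne'
  have hle₀ : C₀ ≤ C := (le_max_left _ _).trans (le_max_right _ _)
  have hle₁ : C₁ ≤ C := (le_max_right _ _).trans (le_max_right _ _)
  refine ⟨C, hC, fun t f g => ?_⟩
  simp_rw [Kf, ENNReal.iInf_add, ENNReal.add_iInf, ENNReal.mul_iInf_of_ne hC0 hC]
  refine le_iInf₂ fun x y => iInf_le_of_le (x + y) ?_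
  calc N₀ (x + y) + ENNReal.ofReal t * N₁ (f + g - (x + y))
      ≤ C * (N₀ x + N₀ y) + ENNReal.ofReal t * (C * (N₁ (f - x) + N₁ (g - y))) := by
        rw [add_sub_add_comm]
        gcongr
        · exact (h₀ x y).trans (by gcongr)
        · exact (h₁ _ _).trans (by gcongr)
    _ = C * (N₀ x + ENNReal.ofReal t * N₁ (f - x) + (N₀ y + ENNReal.ofReal t * N₁ (g - y))) := by
      ring

theorem IsQuasiSeminorm.exists_Kf_le_sub_add (h₀ : IsQuasiSeminorm N₀) (h₁ : IsQuasiSeminorm N₁) :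
    ∃ C : ℝ≥0∞, C ≠ ∞ ∧ ∀ t f g, Kf N₀ N₁ t f ≤ C * (Kf N₀ N₁ t g + Kf N₀ N₁ t (f - g)) ∧
      Kf N₀ N₁ t (f - g) ≤ C * (Kf N₀ N₁ t f + Kf N₀ N₁ t g) := by
  obtain ⟨C, hC, hadd⟩ := h₀.exists_Kf_add_le h₁
  refine ⟨C, hC, fun t f g => ⟨?_, ?_⟩⟩
  · simpa using hadd t g (f - g)
  · simpa only [sub_eq_add_neg, Kf_neg h₀ h₁] using hadd t f (-g)

theorem LqNorm_weight_mul_eq_eLpNorm (hq : q ≠ 0) {A : Set ℝ} (hA : MeasurableSet A)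
    (hA0 : A ⊆ Ioi 0) (σ : ℝ) (b : ℝ → ℝ) (F : ℝ → ℝ≥0∞) :
    LqNorm q A (fun u => ENNReal.ofReal (u ^ (-σ - q⁻¹.toReal) * b u) * F u) =
      eLpNorm (fun u => ENNReal.ofReal (u ^ (-σ) * b u) * F u) q (logMeasure.restrict A) := by
  refine LqNorm_eq_eLpNorm_logMeasure hq hA hA0 fun u hu => ?_
  have hu0 : 0 < u := hA0 hu
  rw [← mul_assoc, ← ENNReal.ofReal_mul (by positivity), ← mul_assoc, ← Real.rpow_add hu0,
    neg_add_eq_sub]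

theorem normK_eq_eLpNorm (hq : q ≠ 0) (N₀ N₁ : G → ℝ≥0∞) (θ : ℝ) (b : ℝ → ℝ) (f : G) :
    normK N₀ N₁ θ q b f =
      eLpNorm (fun u => ENNReal.ofReal (u ^ (-θ) * b u) * Kf N₀ N₁ u f) q logMeasure := by
  rw [normK, LqNorm_weight_mul_eq_eLpNorm hq measurableSet_Ioi subset_rfl, restrict_Ioi_logMeasure]

theorem normR_eq_eLpNorm (hr : r ≠ 0) (hq : q ≠ 0) (N₀ N₁ : G → ℝ≥0∞) (σ : ℝ) (b a : ℝ → ℝ)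
    (f : G) :
    normR N₀ N₁ σ r q b a f =
      eLpNorm (fun t => ENNReal.ofReal (b t / a t) *
        eLpNorm (fun u => ENNReal.ofReal (u ^ (-σ) * a u) * Kf N₀ N₁ u f) q
          (logMeasure.restrict (Ioi t))) r logMeasure := by
  refine Eq.trans ?_ (congrArg (fun μ => eLpNorm _ r μ) restrict_Ioi_logMeasure)
  refine LqNorm_eq_eLpNorm_logMeasure hr measurableSet_Ioi subset_rfl fun t (ht : 0 < t) => ?_
  rw [LqNorm_weight_mul_eq_eLpNorm hq measurableSet_Ioi (Ioi_subset_Ioi ht.le),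
    ENNReal.ofReal_mul (by positivity), mul_assoc]

theorem LqNorm_svWgt_eq_eLpNorm (hr : r ≠ 0) (d : ℝ → ℝ) (t : ℝ) :
    LqNorm r (Ioo 0 t) (svWgt r d) =
      eLpNorm (fun s => ENNReal.ofReal (d s)) r (logMeasure.restrict (Ioo 0 t)) :=
  LqNorm_eq_eLpNorm_logMeasure hr measurableSet_Ioo Ioo_subset_Ioi_self fun _ hs =>
    ENNReal.ofReal_mul (Real.rpow_nonneg hs.1.le _)

end KFunctional

section InitialNorm

variable {q r : ℝ≥0∞} {a d : ℝ → ℝ} {t κ ε : ℝ}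

/-- The norm `‖s ^ (-1/r) * d s‖_{r, (0, t)}` of a weight near the origin, in terms of `ds / s`. -/
def initialNorm (r : ℝ≥0∞) (d : ℝ → ℝ) (t : ℝ) : ℝ≥0∞ :=
  eLpNorm (fun s => ENNReal.ofReal (d s)) r (logMeasure.restrict (Ioo 0 t))

theorem initialNorm_mono (r : ℝ≥0∞) (d : ℝ → ℝ) : Monotone (initialNorm r d) := fun _ _ hst =>
  eLpNorm_mono_measure _ (Measure.restrict_mono_set _ (Ioo_subset_Ioo_right hst))

namespace PotterBounded

theorem exists_le_initialNorm (hd : PotterBounded d) (hr : r ≠ 0) :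
    ∃ C : ℝ≥0∞, C ≠ ∞ ∧ ∀ t, 0 < t → ENNReal.ofReal (d t) ≤ C * initialNorm r d t := by
  obtain ⟨B, hB, htemp⟩ := hd.exists_isTempered 0
  simp only [Real.rpow_zero, one_mul] at htemp
  obtain ⟨C, hC, hblock⟩ :=
    IsTempered.exists_le_mul_eLpNorm_Ico hr hB (by positivity : (0 : ℝ) ≤ |0| + 1)
  refine ⟨C, hC, fun t ht => ?_⟩
  refine (hblock _ htemp (t / 2) t (half_pos ht) (by linarith) (by linarith)).trans ?_
  gcongr
  refine eLpNorm_mono_measure _ (Measure.restrict_mono_set _ fun u hu => ?_)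
  exact ⟨(half_pos ht).trans_le hu.1, hu.2.trans_eq (mul_div_cancel₀ t two_ne_zero)⟩

theorem exists_eLpNorm_Ico_le (hd : PotterBounded d) (hr : r ≠ 0) (hε : 0 < ε) :
    ∃ C : ℝ≥0∞, C ≠ ∞ ∧ ∀ s t, 0 < s →
      eLpNorm (fun u => ENNReal.ofReal (d u)) r (logMeasure.restrict (Ico s t)) ≤
        C * ENNReal.ofReal (symmRatio t s ^ ε) * ENNReal.ofReal (d s) := by
  obtain ⟨C, hC, hbump⟩ := hd.exists_eLpNorm_mul_symmRatio_rpow_neg_le hr hε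
  refine ⟨C, hC, fun s t hs => ?_⟩
  have hpt : ∀ u ∈ Ico s t, ENNReal.ofReal (d u) ≤
      ENNReal.ofReal (symmRatio t s ^ ε) * ENNReal.ofReal (d u * symmRatio u s ^ (-ε)) := by
    intro u hu
    have hu0 := hs.trans_le hu.1
    have ht := hu0.trans hu.2
    have hdu := hd.pos u hu0
    have hR := symmRatio_pos hu0 hs
    have hR' := (symmRatio_pos ht hs).le
    rw [← ENNReal.ofReal_mul (by positivity)]
    refine ENNReal.ofReal_le_ofReal ?_
    calc d u = symmRatio u s ^ ε * (d u * symmRatio u s ^ (-ε)) := by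
          rw [mul_left_comm, ← Real.rpow_add hR, add_neg_cancel, Real.rpow_zero, mul_one]
      _ ≤ symmRatio t s ^ ε * (d u * symmRatio u s ^ (-ε)) := by
        gcongr
        rw [symmRatio_of_ge hs hu.1, symmRatio_of_ge hs (hu.1.trans hu.2.le)]
        gcongr
        exact hu.2.le
  calc _ ≤ ENNReal.ofReal (symmRatio t s ^ ε) * eLpNorm
          (fun u => ENNReal.ofReal (d u * symmRatio u s ^ (-ε))) r
          (logMeasure.restrict (Ico s t)) :=
        eLpNorm_le_const_mul_of_ae_le ofReal_ne_top
          ((ae_restrict_iff' measurableSet_Ico).2 (ae_of_all _ hpt))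
    _ ≤ ENNReal.ofReal (symmRatio t s ^ ε) * (C * ENNReal.ofReal (d s)) := by
      gcongr
      exact (eLpNorm_mono_measure _ Measure.restrict_le_self).trans (hbump s hs)
    _ = C * ENNReal.ofReal (symmRatio t s ^ ε) * ENNReal.ofReal (d s) := by ring

theorem exists_isTempered_initialNorm (hd : PotterBounded d) (hr : r ≠ 0) (hε : 0 < ε) :
    ∃ C : ℝ≥0∞, C ≠ ∞ ∧ IsTempered C ε (initialNorm r d) := by
  obtain ⟨C₁, hC₁, hlower⟩ := hd.exists_le_initialNorm hr
  obtain ⟨C₂, hC₂, hIco⟩ := hd.exists_eLpNorm_Ico_le hr hε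
  obtain ⟨C₃, hC₃, hunion⟩ := exists_eLpNorm_restrict_union_le (μ := logMeasure) hr
  refine ⟨1 + C₃ * (1 + C₂ * C₁), by finiteness, fun t s ht hs => ?_⟩
  have hone : 1 ≤ ENNReal.ofReal (symmRatio t s ^ ε) :=
    ENNReal.one_le_ofReal.2 (Real.one_le_rpow (one_le_symmRatio ht hs) hε.le)
  rcases le_total t s with hts | hst
  · refine (initialNorm_mono r d hts).trans (le_mul_of_one_le_left' ?_)
    exact one_le_mul_of_one_le_of_one_le le_self_add hone
  have hnear : initialNorm r d s ≤
      (1 + C₂ * C₁) * ENNReal.ofReal (symmRatio t s ^ ε) * initialNorm r d s :=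
    le_mul_of_one_le_left' (one_le_mul_of_one_le_of_one_le le_self_add hone)
  have hfar : eLpNorm (fun u => ENNReal.ofReal (d u)) r (logMeasure.restrict (Ico s t)) ≤
      (1 + C₂ * C₁) * ENNReal.ofReal (symmRatio t s ^ ε) * initialNorm r d s :=
    calc _ ≤ C₂ * ENNReal.ofReal (symmRatio t s ^ ε) * (C₁ * initialNorm r d s) :=
          (hIco s t hs).trans (by gcongr; exact hlower s hs)
      _ = C₂ * C₁ * ENNReal.ofReal (symmRatio t s ^ ε) * initialNorm r d s := by ring
      _ ≤ _ := by gcongr; exact le_add_self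
  calc initialNorm r d t
      ≤ C₃ * ((1 + C₂ * C₁) * ENNReal.ofReal (symmRatio t s ^ ε) * initialNorm r d s) := by
        rw [initialNorm, ← Ioo_union_Ico_eq_Ioo hs hst]
        exact hunion _ _ _ _ hnear hfar
    _ ≤ _ := by
      rw [← mul_assoc, ← mul_assoc]
      gcongr
      exact le_add_self

theorem initialNorm_ne_top (hd : PotterBounded d) (hr : r ≠ 0) (h1 : initialNorm r d 1 ≠ ∞)
    (ht : 0 < t) : initialNorm r d t ≠ ∞ := by
  obtain ⟨C, hC, htemp⟩ := hd.exists_isTempered_initialNorm hr one_pos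
  exact ne_top_of_le_ne_top (ENNReal.mul_ne_top (ENNReal.mul_ne_top hC ofReal_ne_top) h1)
    (htemp t 1 ht one_pos)

theorem initialNorm_ne_zero (hd : PotterBounded d) (hr : r ≠ 0) (ht : 0 < t) :
    initialNorm r d t ≠ 0 := by
  obtain ⟨C, -, hlower⟩ := hd.exists_le_initialNorm hr
  intro h
  have := hlower t ht
  rw [h, mul_zero, nonpos_iff_eq_zero, ENNReal.ofReal_eq_zero] at this
  exact this.not_gt (hd.pos t ht)

theorem initialNorm_toReal (hd : PotterBounded d) (hr : r ≠ 0) (h1 : initialNorm r d 1 ≠ ∞) :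
    PotterBounded fun t => (initialNorm r d t).toReal := by
  refine ⟨fun t ht => ENNReal.toReal_pos (hd.initialNorm_ne_zero hr ht)
    (hd.initialNorm_ne_top hr h1 ht), fun ε hε => ?_⟩
  obtain ⟨C, hC, htemp⟩ := hd.exists_isTempered_initialNorm hr hε
  refine ⟨C.toReal + 1, by positivity, fun s t hs ht => ?_⟩
  have hR := symmRatio_pos hs ht
  calc (initialNorm r d s).toReal
      ≤ (C * ENNReal.ofReal (symmRatio s t ^ ε) * initialNorm r d t).toReal :=
        ENNReal.toReal_mono (ENNReal.mul_ne_top (ENNReal.mul_ne_top hC ofReal_ne_top)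
          (hd.initialNorm_ne_top hr h1 ht)) (htemp s t hs ht)
    _ = C.toReal * symmRatio s t ^ ε * (initialNorm r d t).toReal := by
      rw [ENNReal.toReal_mul, ENNReal.toReal_mul, ENNReal.toReal_ofReal (by positivity)]
    _ ≤ (C.toReal + 1) * symmRatio s t ^ ε * (initialNorm r d t).toReal := by
      gcongr; exact le_add_of_nonneg_right zero_le_one

theorem exists_eLpNorm_Ioi_le (ha : PotterBounded a) (hq : q ≠ 0) (hκ : 0 < κ) :
    ∃ C : ℝ≥0∞, C ≠ ∞ ∧ ∀ t H F, 0 < t → H ≠ ∞ →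
      (∀ u, 0 < u → F u ≤ H * ENNReal.ofReal (a u * symmRatio u t ^ (-κ))) → ∀ s,
        eLpNorm F q (logMeasure.restrict (Ioi s)) ≤ C * (H * ENNReal.ofReal (a t)) ∧
        (t ≤ s → eLpNorm F q (logMeasure.restrict (Ioi s)) ≤
          C * (H * ENNReal.ofReal (a s * symmRatio s t ^ (-κ)))) := by
  obtain ⟨C, hC, hbump⟩ := ha.exists_eLpNorm_mul_symmRatio_rpow_neg_le hq hκ
  refine ⟨C, hC, fun t H F ht hH hF s => ⟨?_, fun hts => ?_⟩⟩
  · calc eLpNorm F q (logMeasure.restrict (Ioi s)) ≤ eLpNorm F q logMeasure :=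
          eLpNorm_mono_measure F Measure.restrict_le_self
      _ ≤ H * (C * ENNReal.ofReal (a t)) :=
        (eLpNorm_le_const_mul_of_ae_le hH (ae_logMeasure_pos.mono hF)).trans
          (mul_le_mul_right (hbump t ht) H)
      _ = C * (H * ENNReal.ofReal (a t)) := mul_left_comm _ _ _
  · have hs := ht.trans_le hts
    have hRs := symmRatio_pos hs ht
    have hpt : ∀ u ∈ Ioi s, F u ≤ H * ENNReal.ofReal (symmRatio s t ^ (-κ)) *
        ENNReal.ofReal (a u * symmRatio u s ^ (-κ)) := by
      intro u hu
      have hu0 := hs.trans hu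
      refine (hF u hu0).trans_eq ?_
      rw [symmRatio_eq_mul ht hts (mem_Ioi.1 hu).le,
        Real.mul_rpow hRs.le (symmRatio_pos hu0 hs).le, mul_assoc H,
        ← ENNReal.ofReal_mul (by positivity), mul_left_comm]
    calc eLpNorm F q (logMeasure.restrict (Ioi s))
        ≤ H * ENNReal.ofReal (symmRatio s t ^ (-κ)) * eLpNorm
            (fun u => ENNReal.ofReal (a u * symmRatio u s ^ (-κ))) q
            (logMeasure.restrict (Ioi s)) :=
          eLpNorm_le_const_mul_of_ae_le (ENNReal.mul_ne_top hH ofReal_ne_top)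
            ((ae_restrict_iff' measurableSet_Ioi).2 (ae_of_all _ hpt))
      _ ≤ H * ENNReal.ofReal (symmRatio s t ^ (-κ)) * (C * ENNReal.ofReal (a s)) := by
        gcongr
        exact (eLpNorm_mono_measure _ Measure.restrict_le_self).trans (hbump s hs)
      _ = C * (H * ENNReal.ofReal (a s * symmRatio s t ^ (-κ))) := by
        rw [ENNReal.ofReal_mul (ha.pos s hs).le]; ring

end PotterBounded

end InitialNorm

section Class

variable {G : Type*} [AddCommGroup G] {N₀ N₁ : G → ℝ≥0∞} {q r : ℝ≥0∞} {a b : ℝ → ℝ}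

/-- `X` behaves with respect to the couple `(N₀, N₁)` like an interpolation norm with parameter `σ`
and slowly varying weight `c`: it dominates `t ^ (-σ) * c t * K(t, f)` for every `t`, and it is at
most `H * t ^ (-σ) * c t` on vectors whose K-functional is concentrated around `t` with height
`H`. -/
structure IsOfClass (N₀ N₁ X : G → ℝ≥0∞) (σ : ℝ) (c : ℝ → ℝ) : Prop where
  lower : ∃ C : ℝ≥0∞, C ≠ ∞ ∧ ∀ t f, 0 < t →
    ENNReal.ofReal (t ^ (-σ) * c t) * Kf N₀ N₁ t f ≤ C * X f
  upper : ∀ κ : ℝ, 0 < κ → ∃ C : ℝ≥0∞, C ≠ ∞ ∧ ∀ t f H, 0 < t → H ≠ ∞ →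
    (∀ u, 0 < u →
      Kf N₀ N₁ u f ≤ H * ENNReal.ofReal ((u / t) ^ σ * symmRatio u t ^ (-κ))) →
    X f ≤ C * (H * ENNReal.ofReal (t ^ (-σ) * c t))

theorem PotterBounded.exists_isTempered_mul_Kf (hb : PotterBounded b) (p : ℝ)
    (N₀ N₁ : G → ℝ≥0∞) : ∃ C : ℝ≥0∞, C ≠ ∞ ∧
      ∀ f, IsTempered C (|p| + 1 + 1) fun u => ENNReal.ofReal (u ^ p * b u) * Kf N₀ N₁ u f := by
  obtain ⟨C, hC, htemp⟩ := hb.exists_isTempered p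
  exact ⟨C, hC, fun f => by simpa only [mul_one] using htemp.mul (isTempered_Kf N₀ N₁ f)⟩

theorem exists_ofReal_mul_Kf_le_normR (ha : PotterBounded a) (hr : r ≠ 0) (hq : q ≠ 0) (σ : ℝ)
    (b : ℝ → ℝ) (N₀ N₁ : G → ℝ≥0∞) : ∃ C : ℝ≥0∞, C ≠ ∞ ∧ ∀ t f, 0 < t →
      ENNReal.ofReal (t ^ (-σ) * a t) * Kf N₀ N₁ t f * initialNorm r (fun s => b s / a s) t ≤
        C * normR N₀ N₁ σ r q b a f := by
  obtain ⟨B, hB, htemp⟩ := ha.exists_isTempered_mul_Kf (-σ) N₀ N₁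
  obtain ⟨C, hC, hblock⟩ := IsTempered.exists_le_mul_eLpNorm_Ico hq hB
    (by positivity : 0 ≤ |-σ| + 1 + 1)
  refine ⟨C, hC, fun t f ht => ?_⟩
  rw [normR_eq_eLpNorm hr hq]
  set F := fun u => ENNReal.ofReal (u ^ (-σ) * a u) * Kf N₀ N₁ u f
  have hinner : ∀ s ∈ Ioo 0 t, F t ≤ C * eLpNorm F q (logMeasure.restrict (Ioi s)) := by
    intro s hs
    refine (hblock F (htemp f) t t ht (by linarith) (by linarith)).trans ?_
    gcongr C * ?_
    exact eLpNorm_mono_measure F (Measure.restrict_mono_set _ fun u hu => hs.2.trans_le hu.1)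
  calc F t * initialNorm r (fun s => b s / a s) t
      ≤ eLpNorm (fun s => F t * ENNReal.ofReal (b s / a s)) r (logMeasure.restrict (Ioo 0 t)) :=
        mul_eLpNorm_le hr _ _
    _ ≤ C * eLpNorm (fun s => ENNReal.ofReal (b s / a s) *
          eLpNorm F q (logMeasure.restrict (Ioi s))) r (logMeasure.restrict (Ioo 0 t)) := by
      refine eLpNorm_le_const_mul_of_ae_le hC
        ((ae_restrict_iff' measurableSet_Ioo).2 (ae_of_all _ fun s hs => ?_))
      refine (mul_le_mul_left (hinner s hs) _).trans_eq ?_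
      ring
    _ ≤ _ := by
      gcongr C * ?_
      exact eLpNorm_mono_measure _ Measure.restrict_le_self

theorem PotterBounded.exists_eLpNorm_Ici_div_mul_le (ha : PotterBounded a) (hb : PotterBounded b)
    (hr : r ≠ 0) {κ : ℝ} (hκ : 0 < κ) : ∃ C : ℝ≥0∞, C ≠ ∞ ∧ ∀ t A (J : ℝ → ℝ≥0∞), 0 < t → A ≠ ∞ →
      (∀ s, t ≤ s → J s ≤ A * ENNReal.ofReal (a s * symmRatio s t ^ (-κ))) →
      eLpNorm (fun s => ENNReal.ofReal (b s / a s) * J s) r (logMeasure.restrict (Ici t)) ≤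
        C * (A * ENNReal.ofReal (a t) * initialNorm r (fun s => b s / a s) t) := by
  obtain ⟨C₁, hC₁, hbump⟩ := hb.exists_eLpNorm_mul_symmRatio_rpow_neg_le hr hκ
  obtain ⟨C₂, hC₂, hlower⟩ := (hb.div ha).exists_le_initialNorm hr
  refine ⟨C₁ * C₂, ENNReal.mul_ne_top hC₁ hC₂, fun t A J ht hA hJ => ?_⟩
  have hpt : ∀ s ∈ Ici t, ENNReal.ofReal (b s / a s) * J s ≤
      A * ENNReal.ofReal (b s * symmRatio s t ^ (-κ)) := by
    intro s hs
    have has := ha.pos s (ht.trans_le hs)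
    have hbs := hb.pos s (ht.trans_le hs)
    refine (mul_le_mul_right (hJ s hs) _).trans_eq ?_
    rw [mul_left_comm, ← ENNReal.ofReal_mul (by positivity), ← mul_assoc,
      div_mul_cancel₀ _ has.ne']
  calc _ ≤ A * eLpNorm (fun s => ENNReal.ofReal (b s * symmRatio s t ^ (-κ))) r
          (logMeasure.restrict (Ici t)) :=
        eLpNorm_le_const_mul_of_ae_le hA
          ((ae_restrict_iff' measurableSet_Ici).2 (ae_of_all _ hpt))
    _ ≤ A * (C₁ * ENNReal.ofReal (a t * (b t / a t))) := by
      rw [mul_div_cancel₀ _ (ha.pos t ht).ne']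
      gcongr A * ?_
      exact (eLpNorm_mono_measure _ Measure.restrict_le_self).trans (hbump t ht)
    _ ≤ A * (C₁ * (ENNReal.ofReal (a t) * (C₂ * initialNorm r (fun s => b s / a s) t))) := by
      rw [ENNReal.ofReal_mul (ha.pos t ht).le]
      gcongr
      exact hlower t ht
    _ = _ := by ring

theorem PotterBounded.exists_eLpNorm_div_mul_le (ha : PotterBounded a) (hb : PotterBounded b)
    (hr : r ≠ 0) {κ : ℝ} (hκ : 0 < κ) : ∃ C : ℝ≥0∞, C ≠ ∞ ∧ ∀ t A (J : ℝ → ℝ≥0∞), 0 < t → A ≠ ∞ →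
      (∀ s, J s ≤ A * ENNReal.ofReal (a t)) →
      (∀ s, t ≤ s → J s ≤ A * ENNReal.ofReal (a s * symmRatio s t ^ (-κ))) →
      eLpNorm (fun s => ENNReal.ofReal (b s / a s) * J s) r logMeasure ≤
        C * (A * ENNReal.ofReal (a t) * initialNorm r (fun s => b s / a s) t) := by
  obtain ⟨C₁, hC₁, hfar⟩ := ha.exists_eLpNorm_Ici_div_mul_le hb hr hκ
  obtain ⟨C₂, hC₂, hunion⟩ := exists_eLpNorm_restrict_union_le (μ := logMeasure) hr
  refine ⟨C₂ * (1 + C₁), by finiteness, fun t A J ht hA hJ hJ' => ?_⟩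
  set B := A * ENNReal.ofReal (a t) * initialNorm r (fun s => b s / a s) t
  have hIoo : eLpNorm (fun s => ENNReal.ofReal (b s / a s) * J s) r
      (logMeasure.restrict (Ioo 0 t)) ≤ B := by
    refine eLpNorm_le_const_mul_of_ae_le (by finiteness) (ae_of_all _ fun s => ?_)
    rw [mul_comm]
    exact mul_le_mul_left (hJ s) _
  rw [← restrict_Ioi_logMeasure, ← Ioo_union_Ici_eq_Ioi ht, mul_assoc]
  refine hunion _ _ _ _ (hIoo.trans (le_mul_of_one_le_left' le_self_add))
    ((hfar t A J ht hA hJ').trans ?_)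
  gcongr
  exact le_add_self

theorem PotterBounded.exists_normR_le (ha : PotterBounded a) (hb : PotterBounded b) (hr : r ≠ 0)
    (hq : q ≠ 0) (σ : ℝ) (N₀ N₁ : G → ℝ≥0∞) {κ : ℝ} (hκ : 0 < κ) :
    ∃ C : ℝ≥0∞, C ≠ ∞ ∧ ∀ t f H, 0 < t → H ≠ ∞ →
      (∀ u, 0 < u →
        Kf N₀ N₁ u f ≤ H * ENNReal.ofReal ((u / t) ^ σ * symmRatio u t ^ (-κ))) →
      normR N₀ N₁ σ r q b a f ≤
        C * (H * ENNReal.ofReal (t ^ (-σ) * a t) * initialNorm r (fun s => b s / a s) t) := by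
  obtain ⟨C₁, hC₁, hinner⟩ := ha.exists_eLpNorm_Ioi_le hq hκ
  obtain ⟨C₂, hC₂, houter⟩ := ha.exists_eLpNorm_div_mul_le hb hr hκ
  refine ⟨C₂ * C₁, by finiteness, fun t f H ht hH hK => ?_⟩
  set F := fun u => ENNReal.ofReal (u ^ (-σ) * a u) * Kf N₀ N₁ u f
  set A := H * ENNReal.ofReal (t ^ (-σ)) with hA
  have hAtop : A ≠ ∞ := ENNReal.mul_ne_top hH ofReal_ne_top
  have hF : ∀ u, 0 < u → F u ≤ A * ENNReal.ofReal (a u * symmRatio u t ^ (-κ)) := by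
    intro u hu
    have hau := ha.pos u hu
    calc F u ≤ ENNReal.ofReal (u ^ (-σ) * a u) *
          (H * ENNReal.ofReal ((u / t) ^ σ * symmRatio u t ^ (-κ))) :=
          mul_le_mul_right (hK u hu) _
      _ = _ := by
        rw [mul_left_comm, hA, mul_assoc, ← ENNReal.ofReal_mul (by positivity),
          ← ENNReal.ofReal_mul (by positivity), Real.div_rpow hu.le ht.le, Real.rpow_neg ht.le,
          Real.rpow_neg hu.le]
        congr 2
        field_simp
  have hinner := hinner t A F ht hAtop hF
  rw [normR_eq_eLpNorm hr hq]
  refine (houter t (C₁ * A) _ ht (ENNReal.mul_ne_top hC₁ hAtop)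
    (fun s => (hinner s).1.trans_eq (mul_assoc _ _ _).symm)
    fun s hs => ((hinner s).2 hs).trans_eq (mul_assoc _ _ _).symm).trans_eq ?_
  rw [hA, ENNReal.ofReal_mul (by positivity)]
  ring

theorem PotterBounded.isOfClass_normR (ha : PotterBounded a) (hb : PotterBounded b) (hr : r ≠ 0)
    (hq : q ≠ 0) (h1 : initialNorm r (fun s => b s / a s) 1 ≠ ∞) (σ : ℝ) (N₀ N₁ : G → ℝ≥0∞) :
    IsOfClass N₀ N₁ (normR N₀ N₁ σ r q b a) σ
      fun t => a t * (initialNorm r (fun s => b s / a s) t).toReal := by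
  have hofReal (t : ℝ) (ht : 0 < t) :
      ENNReal.ofReal (t ^ (-σ) * (a t * (initialNorm r (fun s => b s / a s) t).toReal)) =
        ENNReal.ofReal (t ^ (-σ) * a t) * initialNorm r (fun s => b s / a s) t := by
    rw [← mul_assoc, ENNReal.ofReal_mul (ha.rpow_mul_pos ht).le,
      ENNReal.ofReal_toReal ((hb.div ha).initialNorm_ne_top hr h1 ht)]
  refine ⟨?_, fun κ hκ => ?_⟩
  · obtain ⟨C, hC, h⟩ := exists_ofReal_mul_Kf_le_normR ha hr hq σ b N₀ N₁
    refine ⟨C, hC, fun t f ht => ?_⟩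
    rw [hofReal t ht, mul_right_comm]
    exact h t f ht
  · obtain ⟨C, hC, h⟩ := ha.exists_normR_le hb hr hq σ N₀ N₁ hκ
    refine ⟨C, hC, fun t f H ht hH hK => ?_⟩
    rw [hofReal t ht, ← mul_assoc H]
    exact h t f H ht hH hK

end Class

section Reiteration

variable {G : Type*} [AddCommGroup G] {N₀ N₁ X₀ X₁ : G → ℝ≥0∞} {r : ℝ≥0∞}
  {p p' k k' t u κ θ θ₀ θ₁ η : ℝ} {a c₀ c₁ S : ℝ → ℝ}

theorem rpow_mul_symmRatio_rpow_of_le (hu : 0 < u) (h : u ≤ t) (p k : ℝ) :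
    (u / t) ^ p * symmRatio u t ^ k = (u / t) ^ (p - k) := by
  have hx : 0 < u / t := div_pos hu (hu.trans_le h)
  rw [symmRatio_of_le hu h, ← inv_div u t, Real.inv_rpow hx.le, Real.rpow_sub hx, ← div_eq_mul_inv]

theorem rpow_mul_symmRatio_rpow_of_ge (ht : 0 < t) (h : t ≤ u) (p k : ℝ) :
    (u / t) ^ p * symmRatio u t ^ k = (u / t) ^ (p + k) := by
  rw [symmRatio_of_ge ht h, ← Real.rpow_add (div_pos (ht.trans_le h) ht)]

theorem rpow_mul_symmRatio_rpow_le_of_le (hu : 0 < u) (hut : u ≤ t) (h : p' - k' ≤ p - k) :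
    (u / t) ^ p * symmRatio u t ^ k ≤ (u / t) ^ p' * symmRatio u t ^ k' := by
  have ht := hu.trans_le hut
  rw [rpow_mul_symmRatio_rpow_of_le hu hut, rpow_mul_symmRatio_rpow_of_le hu hut]
  exact Real.rpow_le_rpow_of_exponent_ge (div_pos hu ht) ((div_le_one ht).2 hut) h

theorem rpow_mul_symmRatio_rpow_le_of_ge (ht : 0 < t) (htu : t ≤ u) (h : p + k ≤ p' + k') :
    (u / t) ^ p * symmRatio u t ^ k ≤ (u / t) ^ p' * symmRatio u t ^ k' := by
  rw [rpow_mul_symmRatio_rpow_of_ge ht htu, rpow_mul_symmRatio_rpow_of_ge ht htu]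
  exact Real.rpow_le_rpow_of_exponent_le ((one_le_div ht).2 htu) h

/-- `κ`-room between the exponents `0 < θ₀ < η < θ₁ < 1`: a perturbation by `κ` of any of them
stays on the correct side of its neighbours. -/
structure HasGap (κ θ₀ η θ₁ : ℝ) : Prop where
  pos : 0 < κ
  left : κ ≤ θ₀
  left_mid : θ₀ + κ ≤ η - κ
  mid_right : η + κ ≤ θ₁ - κ
  right : θ₁ + κ ≤ 1

theorem exists_hasGap (h₀ : 0 < θ₀) (h₀η : θ₀ < η) (hη₁ : η < θ₁) (h₁ : θ₁ < 1) :
    ∃ κ, HasGap κ θ₀ η θ₁ := by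
  refine ⟨min (min θ₀ (η - θ₀)) (min (θ₁ - η) (1 - θ₁)) / 2, ?_⟩
  set m := min (min θ₀ (η - θ₀)) (min (θ₁ - η) (1 - θ₁))
  have hm : 0 < m := by simp [m, h₀, h₀η, hη₁, h₁]
  have hle : (m ≤ θ₀ ∧ m ≤ η - θ₀) ∧ m ≤ θ₁ - η ∧ m ≤ 1 - θ₁ := by
    simp only [← le_min_iff, m, le_refl]
  constructor <;> linarith

theorem Kf_le_mul_div (h₀ : IsQuasiSeminorm N₀) (ht : 0 < t) {f : G} {H : ℝ≥0∞}
    (hf : ENNReal.ofReal t * N₁ f ≤ H) (u : ℝ) : Kf N₀ N₁ u f ≤ H * ENNReal.ofReal (u / t) := by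
  calc Kf N₀ N₁ u f ≤ ENNReal.ofReal u * N₁ f := Kf_le_right h₀ u f
    _ = ENNReal.ofReal t * N₁ f * ENNReal.ofReal (u / t) := by
      rw [mul_right_comm, ← ENNReal.ofReal_mul ht.le, mul_div_cancel₀ _ ht.ne']
    _ ≤ H * ENNReal.ofReal (u / t) := mul_le_mul_left hf _

theorem IsQuasiSeminorm.exists_Kf_le_and_Kf_sub_le (h₀ : IsQuasiSeminorm N₀)
    (h₁ : IsQuasiSeminorm N₁) (hgap : HasGap κ θ₀ η θ₁) :
    ∃ C : ℝ≥0∞, C ≠ ∞ ∧ ∀ t f H H', 0 < t → H < H' →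
      (∀ u, 0 < u → Kf N₀ N₁ u f ≤ H * ENNReal.ofReal ((u / t) ^ η * symmRatio u t ^ κ)) →
      ∃ g, ∀ u, 0 < u →
        Kf N₀ N₁ u g ≤ C * H' * ENNReal.ofReal ((u / t) ^ θ₀ * symmRatio u t ^ (-κ)) ∧
        Kf N₀ N₁ u (f - g) ≤ C * H' * ENNReal.ofReal ((u / t) ^ θ₁ * symmRatio u t ^ (-κ)) := by
  obtain ⟨C, hC, hsplit⟩ := h₀.exists_Kf_le_sub_add h₁
  obtain ⟨hκ, hl, hlm, hmr, hr⟩ := hgap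
  refine ⟨1 + C * 2, by finiteness, fun t f H H' ht hHH' hK => ?_⟩
  have hKt : Kf N₀ N₁ t f < H' := by
    refine (hK t ht).trans_lt ?_
    rwa [rpow_mul_symmRatio_rpow_of_le ht le_rfl, div_self ht.ne', Real.one_rpow,
      ENNReal.ofReal_one, mul_one]
  obtain ⟨g, hg⟩ := iInf_lt_iff.1 hKt
  refine ⟨g, fun u hu => ?_⟩
  set w : ℝ → ℝ → ℝ≥0∞ := fun p k => ENNReal.ofReal ((u / t) ^ p * symmRatio u t ^ k)
  have hKu : Kf N₀ N₁ u f ≤ H' * w η κ := (hK u hu).trans (mul_le_mul_left hHH'.le _)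
  have hadd {x y z W : ℝ≥0∞} (hz : z ≤ C * (x + y)) (hx : x ≤ H' * W) (hy : y ≤ H' * W) :
      z ≤ (1 + C * 2) * H' * W := by
    calc z ≤ C * (H' * W + H' * W) := hz.trans (mul_le_mul_right (add_le_add hx hy) _)
      _ = C * 2 * H' * W := by ring
      _ ≤ _ := by gcongr; exact le_add_self
  have hone {z W : ℝ≥0∞} (hz : z ≤ H' * W) : z ≤ (1 + C * 2) * H' * W := by
    rw [mul_assoc]; exact hz.trans (le_mul_of_one_le_left' le_self_add)
  rcases le_total u t with hut | htu
  · have hw {p k p' k' : ℝ} (h : p' - k' ≤ p - k) : H' * w p k ≤ H' * w p' k' :=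
      mul_le_mul_right (ENNReal.ofReal_le_ofReal (rpow_mul_symmRatio_rpow_le_of_le hu hut h)) _
    have hfg : Kf N₀ N₁ u (f - g) ≤ H' * w 1 0 := by
      simpa [w] using Kf_le_mul_div h₀ ht (le_add_self.trans hg.le) u
    have hgle := (hsplit u f (f - g)).2
    rw [sub_sub_self] at hgle
    exact ⟨hadd hgle (hKu.trans (hw (by linarith))) (hfg.trans (hw (by linarith))),
      hone (hfg.trans (hw (by linarith)))⟩
  · have hw {p k p' k' : ℝ} (h : p + k ≤ p' + k') : H' * w p k ≤ H' * w p' k' :=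
      mul_le_mul_right (ENNReal.ofReal_le_ofReal (rpow_mul_symmRatio_rpow_le_of_ge ht htu h)) _
    have hgle : Kf N₀ N₁ u g ≤ H' * w 0 0 := by
      simpa [w] using (Kf_le_left h₁ u g).trans (le_self_add.trans hg.le)
    exact ⟨hone (hgle.trans (hw (by linarith))), hadd (hsplit u f g).2
      (hKu.trans (hw (by linarith))) (hgle.trans (hw (by linarith)))⟩

theorem ofReal_rpow_sub_mul_div_mul {x y : ℝ} (ht : 0 < t) (hx : 0 < x) (hy : 0 < y)
    (θ₀ θ₁ : ℝ) :
    ENNReal.ofReal (t ^ (θ₁ - θ₀) * (x / y)) * ENNReal.ofReal (t ^ (-θ₁) * y) =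
      ENNReal.ofReal (t ^ (-θ₀) * x) := by
  rw [← ENNReal.ofReal_mul (by positivity), Real.rpow_sub ht, Real.rpow_neg ht.le,
    Real.rpow_neg ht.le]
  congr 1
  field_simp

theorem IsOfClass.exists_ofReal_mul_Kf_le_Kf (hX₀ : IsOfClass N₀ N₁ X₀ θ₀ c₀)
    (hX₁ : IsOfClass N₀ N₁ X₁ θ₁ c₁) (h₀ : IsQuasiSeminorm N₀) (h₁ : IsQuasiSeminorm N₁)
    (hc₀ : ∀ t, 0 < t → 0 < c₀ t) (hc₁ : ∀ t, 0 < t → 0 < c₁ t) :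
    ∃ C : ℝ≥0∞, C ≠ ∞ ∧ ∀ t f, 0 < t → ENNReal.ofReal (t ^ (-θ₀) * c₀ t) * Kf N₀ N₁ t f ≤
      C * Kf X₀ X₁ (t ^ (θ₁ - θ₀) * (c₀ t / c₁ t)) f := by
  obtain ⟨C₀, hC₀, hlow₀⟩ := hX₀.lower
  obtain ⟨C₁, hC₁, hlow₁⟩ := hX₁.lower
  obtain ⟨C, hC, hsplit⟩ := h₀.exists_Kf_le_sub_add h₁
  set D := 1 + C * (C₀ + C₁)
  have hD0 : D ≠ 0 := (one_pos.trans_le le_self_add).ne'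
  have hD : D ≠ ∞ := by finiteness
  refine ⟨D, hD, fun t f ht => ?_⟩
  set ρ := t ^ (θ₁ - θ₀) * (c₀ t / c₁ t)
  refine (le_iInf fun g => ?_).trans_eq (ENNReal.mul_iInf_of_ne hD0 hD).symm
  set w := ENNReal.ofReal (t ^ (-θ₀) * c₀ t) with hw
  have hfg : w * Kf N₀ N₁ t (f - g) ≤ ENNReal.ofReal ρ * (C₁ * X₁ (f - g)) := by
    rw [hw, ← ofReal_rpow_sub_mul_div_mul ht (hc₀ t ht) (hc₁ t ht) θ₀ θ₁, mul_assoc]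
    exact mul_le_mul_right (hlow₁ t _ ht) _
  calc w * Kf N₀ N₁ t f ≤ w * (C * (Kf N₀ N₁ t g + Kf N₀ N₁ t (f - g))) :=
        mul_le_mul_right (hsplit t f g).1 _
    _ = C * (w * Kf N₀ N₁ t g + w * Kf N₀ N₁ t (f - g)) := by ring
    _ ≤ C * (C₀ * X₀ g + ENNReal.ofReal ρ * (C₁ * X₁ (f - g))) := by
      exact mul_le_mul_right (add_le_add (hlow₀ t g ht) hfg) C
    _ ≤ C * ((C₀ + C₁) * X₀ g + ENNReal.ofReal ρ * ((C₀ + C₁) * X₁ (f - g))) := by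
      gcongr <;> simp
    _ = C * (C₀ + C₁) * (X₀ g + ENNReal.ofReal ρ * X₁ (f - g)) := by ring
    _ ≤ D * (X₀ g + ENNReal.ofReal ρ * X₁ (f - g)) := mul_le_mul_left le_add_self _

theorem IsOfClass.exists_Kf_le (hX₀ : IsOfClass N₀ N₁ X₀ θ₀ c₀) (hX₁ : IsOfClass N₀ N₁ X₁ θ₁ c₁)
    (h₀ : IsQuasiSeminorm N₀) (h₁ : IsQuasiSeminorm N₁) (hc₀ : ∀ t, 0 < t → 0 < c₀ t)
    (hc₁ : ∀ t, 0 < t → 0 < c₁ t) (hgap : HasGap κ θ₀ η θ₁) :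
    ∃ C : ℝ≥0∞, C ≠ ∞ ∧ ∀ t f H, 0 < t → H ≠ ∞ →
      (∀ u, 0 < u → Kf N₀ N₁ u f ≤ H * ENNReal.ofReal ((u / t) ^ η * symmRatio u t ^ κ)) →
      Kf X₀ X₁ (t ^ (θ₁ - θ₀) * (c₀ t / c₁ t)) f ≤
        C * ENNReal.ofReal (t ^ (-θ₀) * c₀ t) * H := by
  obtain ⟨C₀, hC₀, hup₀⟩ := hX₀.upper κ hgap.pos
  obtain ⟨C₁, hC₁, hup₁⟩ := hX₁.upper κ hgap.pos
  obtain ⟨C, hC, hsplit⟩ := h₀.exists_Kf_le_and_Kf_sub_le h₁ hgap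
  refine ⟨(C₀ + C₁) * C, by finiteness, fun t f H ht hH hK => ?_⟩
  set w := ENNReal.ofReal (t ^ (-θ₀) * c₀ t) with hw
  refine ENNReal.le_mul_of_forall_lt (.inr hH) (.inl (by finiteness)) fun x hx H' hHH' => ?_
  rcases eq_or_ne H' ∞ with rfl | hH'
  · rw [ENNReal.mul_top hx.ne_bot]; exact le_top
  obtain ⟨g, hg⟩ := hsplit t f H H' ht hHH' hK
  have hCH : C * H' ≠ ∞ := ENNReal.mul_ne_top hC hH'
  refine le_trans ?_ (mul_le_mul_left hx.le H')
  calc Kf X₀ X₁ (t ^ (θ₁ - θ₀) * (c₀ t / c₁ t)) f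
      ≤ X₀ g + ENNReal.ofReal (t ^ (θ₁ - θ₀) * (c₀ t / c₁ t)) * X₁ (f - g) := Kf_le _ _ _ _ _
    _ ≤ C₀ * (C * H' * w) + ENNReal.ofReal (t ^ (θ₁ - θ₀) * (c₀ t / c₁ t)) *
          (C₁ * (C * H' * ENNReal.ofReal (t ^ (-θ₁) * c₁ t))) := by
      gcongr
      · exact hup₀ t g _ ht hCH fun u hu => (hg u hu).1
      · exact hup₁ t _ _ ht hCH fun u hu => (hg u hu).2
    _ = (C₀ + C₁) * C * w * H' := by
      rw [hw, ← ofReal_rpow_sub_mul_div_mul ht (hc₀ t ht) (hc₁ t ht) θ₀ θ₁]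
      ring

theorem PotterBounded.exists_le_logMaximal (hS : PotterBounded S) (hκ : 0 < κ) (η : ℝ) :
    ∃ C : ℝ≥0∞, C ≠ ∞ ∧ ∀ (K : ℝ → ℝ≥0∞) t u, 0 < t → 0 < u →
      K u ≤ C * ENNReal.ofReal (t ^ (-η) * S t)⁻¹ *
        logMaximal κ (fun v => ENNReal.ofReal (v ^ (-η) * S v) * K v) t *
          ENNReal.ofReal ((u / t) ^ η * symmRatio u t ^ (2 * κ)) := by
  obtain ⟨C, hC, hbound⟩ := hS.inv.bound κ hκ
  refine ⟨ENNReal.ofReal C, ofReal_ne_top, fun K t u ht hu => ?_⟩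
  have hR := symmRatio_pos hu ht
  have hSt := hS.pos t ht
  have hwu : 0 < u ^ (-η) * S u := hS.rpow_mul_pos hu
  set x : ℝ → ℝ≥0∞ := fun v => ENNReal.ofReal (v ^ (-η) * S v) * K v
  have hpow : (u ^ (-η))⁻¹ = (t ^ (-η))⁻¹ * (u / t) ^ η := by
    rw [Real.rpow_neg hu.le, Real.rpow_neg ht.le, inv_inv, inv_inv, Real.div_rpow hu.le ht.le]
    field_simp
  have hweight : (u ^ (-η) * S u)⁻¹ * symmRatio u t ^ κ ≤
      C * (t ^ (-η) * S t)⁻¹ * ((u / t) ^ η * symmRatio u t ^ (2 * κ)) := by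
    calc _ = (u ^ (-η))⁻¹ * (S u)⁻¹ * symmRatio u t ^ κ := by rw [mul_inv]
      _ ≤ (u ^ (-η))⁻¹ * (C * symmRatio u t ^ κ * (S t)⁻¹) * symmRatio u t ^ κ := by
        gcongr; exact hbound u t hu ht
      _ = _ := by rw [hpow, two_mul, Real.rpow_add hR, mul_inv]; ring
  calc K u = ENNReal.ofReal (u ^ (-η) * S u)⁻¹ * x u := by
        rw [← mul_assoc, ← ENNReal.ofReal_mul (by positivity), inv_mul_cancel₀ hwu.ne',
          ENNReal.ofReal_one, one_mul]
    _ ≤ ENNReal.ofReal (u ^ (-η) * S u)⁻¹ *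
          (ENNReal.ofReal (symmRatio u t ^ κ) * logMaximal κ x t) := by
      gcongr; exact le_symmRatio_rpow_mul_logMaximal hu ht κ x
    _ = ENNReal.ofReal ((u ^ (-η) * S u)⁻¹ * symmRatio u t ^ κ) * logMaximal κ x t := by
      rw [ENNReal.ofReal_mul (by positivity), mul_assoc]
    _ ≤ ENNReal.ofReal (C * (t ^ (-η) * S t)⁻¹ * ((u / t) ^ η * symmRatio u t ^ (2 * κ))) *
          logMaximal κ x t := by gcongr
    _ = _ := by
      rw [ENNReal.ofReal_mul (by positivity), ENNReal.ofReal_mul hC.le]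
      ring

theorem rpow_neg_mul_mul_rpow_neg_mul {x y z : ℝ} (ht : 0 < t) (hx : 0 < x) (hy : 0 < y)
    (θ θ₀ θ₁ : ℝ) :
    (t ^ (θ₁ - θ₀) * (x / y)) ^ (-θ) * z * (t ^ (-θ₀) * x) =
      t ^ (-((1 - θ) * θ₀ + θ * θ₁)) * (x ^ (1 - θ) * y ^ θ * z) := by
  have hexp : -((1 - θ) * θ₀ + θ * θ₁) = (θ₁ - θ₀) * -θ + -θ₀ := by ring
  rw [hexp, Real.rpow_add ht, Real.rpow_mul ht.le, Real.mul_rpow (by positivity) (by positivity),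
    Real.div_rpow hx.le hy.le, Real.rpow_neg hy.le, sub_eq_add_neg 1, add_comm 1,
    Real.rpow_add_one hx.ne', div_inv_eq_mul]
  ring

theorem EquivNorms.of_le {F : Type*} {nX nY : F → ℝ≥0∞} {A B : ℝ≥0∞} (hA : A ≠ ∞) (hB : B ≠ ∞)
    (hXY : ∀ f, nX f ≤ A * nY f) (hYX : ∀ f, nY f ≤ B * nX f) : EquivNorms nX nY := by
  have hpos : 0 < 1 + A + B := one_pos.trans_le (le_self_add.trans le_self_add)
  have htop : 1 + A + B ≠ ∞ := by finiteness
  refine ⟨1 + A + B, hpos, htop, fun f => ⟨?_, ?_⟩⟩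
  · rw [ENNReal.inv_mul_le_iff hpos.ne' htop]
    exact (hYX f).trans (mul_le_mul_left le_add_self _)
  · exact (hXY f).trans (mul_le_mul_left (le_add_self.trans le_self_add) _)

/-- The weight `a^#` of the reiteration theorem. -/
def reiterationWeight (θ θ₀ θ₁ : ℝ) (c₀ c₁ a : ℝ → ℝ) (t : ℝ) : ℝ :=
  c₀ t ^ (1 - θ) * c₁ t ^ θ * a (t ^ (θ₁ - θ₀) * (c₀ t / c₁ t))

protected theorem PotterBounded.reiterationWeight (ha : PotterBounded a) (hc₀ : PotterBounded c₀)
    (hc₁ : PotterBounded c₁) (hθ : 0 < θ) (hθ' : θ < 1) (hθ₀₁ : θ₀ < θ₁) :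
    PotterBounded (reiterationWeight θ θ₀ θ₁ c₀ c₁ a) :=
  ((hc₀.rpow (sub_pos.2 hθ')).mul (hc₁.rpow hθ)).mul (ha.comp (hc₀.div hc₁) (sub_pos.2 hθ₀₁))

theorem IsOfClass.exists_ofReal_mul_Kf_le_comp (hX₀ : IsOfClass N₀ N₁ X₀ θ₀ c₀)
    (hX₁ : IsOfClass N₀ N₁ X₁ θ₁ c₁) (h₀ : IsQuasiSeminorm N₀) (h₁ : IsQuasiSeminorm N₁)
    (ha : ∀ t, 0 < t → 0 < a t) (hc₀ : ∀ t, 0 < t → 0 < c₀ t) (hc₁ : ∀ t, 0 < t → 0 < c₁ t)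
    (θ : ℝ) : ∃ C : ℝ≥0∞, C ≠ ∞ ∧ ∀ t f, 0 < t →
      ENNReal.ofReal (t ^ (-((1 - θ) * θ₀ + θ * θ₁)) *
        reiterationWeight θ θ₀ θ₁ c₀ c₁ a t) * Kf N₀ N₁ t f ≤
      C * (ENNReal.ofReal ((t ^ (θ₁ - θ₀) * (c₀ t / c₁ t)) ^ (-θ) *
        a (t ^ (θ₁ - θ₀) * (c₀ t / c₁ t))) * Kf X₀ X₁ (t ^ (θ₁ - θ₀) * (c₀ t / c₁ t)) f) := by
  obtain ⟨C, hC, hle⟩ := hX₀.exists_ofReal_mul_Kf_le_Kf hX₁ h₀ h₁ hc₀ hc₁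
  refine ⟨C, hC, fun t f ht => ?_⟩
  have hc₀t := hc₀ t ht
  have hc₁t := hc₁ t ht
  have hρ : 0 < t ^ (θ₁ - θ₀) * (c₀ t / c₁ t) := by positivity
  have haρ := ha _ hρ
  rw [reiterationWeight, ← rpow_neg_mul_mul_rpow_neg_mul ht hc₀t hc₁t,
    ENNReal.ofReal_mul (by positivity), mul_assoc]
  exact (mul_le_mul_right (hle t f ht) _).trans_eq (mul_left_comm _ _ _)

theorem IsOfClass.exists_comp_le_logMaximal (hX₀ : IsOfClass N₀ N₁ X₀ θ₀ c₀)
    (hX₁ : IsOfClass N₀ N₁ X₁ θ₁ c₁) (h₀ : IsQuasiSeminorm N₀) (h₁ : IsQuasiSeminorm N₁)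
    (ha : PotterBounded a) (hc₀ : PotterBounded c₀) (hc₁ : PotterBounded c₁) (hθ : 0 < θ)
    (hθ' : θ < 1) (hθ₀₁ : θ₀ < θ₁) (hκ : 0 < κ)
    (hgap : HasGap (2 * κ) θ₀ ((1 - θ) * θ₀ + θ * θ₁) θ₁) :
    ∃ C : ℝ≥0∞, C ≠ ∞ ∧ ∀ t f, 0 < t →
      ENNReal.ofReal ((t ^ (θ₁ - θ₀) * (c₀ t / c₁ t)) ^ (-θ) *
        a (t ^ (θ₁ - θ₀) * (c₀ t / c₁ t))) * Kf X₀ X₁ (t ^ (θ₁ - θ₀) * (c₀ t / c₁ t)) f ≤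
      C * logMaximal κ (fun u => ENNReal.ofReal (u ^ (-((1 - θ) * θ₀ + θ * θ₁)) *
        reiterationWeight θ θ₀ θ₁ c₀ c₁ a u) * Kf N₀ N₁ u f) t := by
  set η := (1 - θ) * θ₀ + θ * θ₁
  set S := reiterationWeight θ θ₀ θ₁ c₀ c₁ a
  have hS : PotterBounded S := ha.reiterationWeight hc₀ hc₁ hθ hθ' hθ₀₁
  obtain ⟨C, hC, hKf⟩ := hX₀.exists_Kf_le hX₁ h₀ h₁ hc₀.pos hc₁.pos hgap
  obtain ⟨B, hB, hmax⟩ := hS.exists_le_logMaximal hκ η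
  refine ⟨1 + C * B, by finiteness, fun t f ht => ?_⟩
  set M := logMaximal κ (fun u => ENNReal.ofReal (u ^ (-η) * S u) * Kf N₀ N₁ u f) t
  rcases eq_or_ne M ∞ with hM | hM
  · rw [hM, ENNReal.mul_top (one_pos.trans_le le_self_add).ne']; exact le_top
  have hwt : 0 < t ^ (-η) * S t := hS.rpow_mul_pos ht
  set ρ := t ^ (θ₁ - θ₀) * (c₀ t / c₁ t)
  have hweight : ρ ^ (-θ) * a ρ * (t ^ (-θ₀) * c₀ t) = t ^ (-η) * S t :=
    rpow_neg_mul_mul_rpow_neg_mul ht (hc₀.pos t ht) (hc₁.pos t ht) θ θ₀ θ₁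
  have hρ : 0 < ρ := (hc₀.div hc₁).rpow_mul_pos ht
  calc ENNReal.ofReal (ρ ^ (-θ) * a ρ) * Kf X₀ X₁ ρ f
      ≤ ENNReal.ofReal (ρ ^ (-θ) * a ρ) * (C * ENNReal.ofReal (t ^ (-θ₀) * c₀ t) *
          (B * ENNReal.ofReal (t ^ (-η) * S t)⁻¹ * M)) := by
        gcongr
        exact hKf t f _ ht (by finiteness) fun u hu => hmax (Kf N₀ N₁ · f) t u ht hu
    _ = C * B * M * (ENNReal.ofReal (ρ ^ (-θ) * a ρ * (t ^ (-θ₀) * c₀ t)) *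
          ENNReal.ofReal (t ^ (-η) * S t)⁻¹) := by
      rw [ENNReal.ofReal_mul (ha.rpow_mul_pos hρ).le]; ring
    _ = C * B * M := by
      rw [hweight, ← ENNReal.ofReal_mul hwt.le, mul_inv_cancel₀ hwt.ne', ENNReal.ofReal_one,
        mul_one]
    _ ≤ (1 + C * B) * M := mul_le_mul_left le_add_self _

theorem IsOfClass.equivNorms_normK (hX₀ : IsOfClass N₀ N₁ X₀ θ₀ c₀)
    (hX₁ : IsOfClass N₀ N₁ X₁ θ₁ c₁) (h₀ : IsQuasiSeminorm N₀) (h₁ : IsQuasiSeminorm N₁)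
    (ha : PotterBounded a) (hc₀ : PotterBounded c₀) (hc₁ : PotterBounded c₁) (hθ : 0 < θ)
    (hθ' : θ < 1) (hθ₀ : 0 < θ₀) (hθ₀₁ : θ₀ < θ₁) (hθ₁ : θ₁ < 1) (hr : r ≠ 0) :
    EquivNorms (normK X₀ X₁ θ r a)
      (normK N₀ N₁ ((1 - θ) * θ₀ + θ * θ₁) r (reiterationWeight θ θ₀ θ₁ c₀ c₁ a)) := by
  have hδ : 0 < θ₁ - θ₀ := sub_pos.2 hθ₀₁
  obtain ⟨κ, hgap⟩ : ∃ κ, HasGap κ θ₀ ((1 - θ) * θ₀ + θ * θ₁) θ₁ :=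
    exists_hasGap hθ₀ (by nlinarith) (by nlinarith) hθ₁
  have hκ : 0 < κ / 2 := half_pos hgap.pos
  rw [← add_halves κ, ← two_mul] at hgap
  obtain ⟨B₀, hB₀, htemp₀⟩ := ha.exists_isTempered_mul_Kf (-θ) X₀ X₁
  obtain ⟨D₀, hD₀, hcomp⟩ := IsTempered.exists_eLpNorm_comp_rpow_mul_le (hc₀.div hc₁) hδ hr hB₀
    (by positivity : 0 ≤ |-θ| + 1 + 1)
  obtain ⟨B₁, hB₁, htemp₁⟩ := (ha.reiterationWeight hc₀ hc₁ hθ hθ' hθ₀₁).exists_isTempered_mul_Kf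
    (-((1 - θ) * θ₀ + θ * θ₁)) N₀ N₁
  obtain ⟨D₁, hD₁, hmax⟩ := IsTempered.exists_eLpNorm_logMaximal_le hr hκ hB₁
    (by positivity : 0 ≤ |(-((1 - θ) * θ₀ + θ * θ₁))| + 1 + 1)
  obtain ⟨A, hA, hup⟩ := hX₀.exists_comp_le_logMaximal hX₁ h₀ h₁ ha hc₀ hc₁ hθ hθ' hθ₀₁ hκ hgap
  obtain ⟨B, hB, hlow⟩ := hX₀.exists_ofReal_mul_Kf_le_comp hX₁ h₀ h₁ ha.pos hc₀.pos hc₁.pos θ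
  refine EquivNorms.of_le (A := D₀ * (A * D₁)) (B := B * D₀) (by finiteness) (by finiteness)
    (fun f => ?_) fun f => ?_ <;> simp only [normK_eq_eLpNorm hr, mul_assoc]
  · refine (hcomp _ (htemp₀ f)).1.trans (mul_le_mul_right ?_ _)
    exact (eLpNorm_le_const_mul_of_ae_le hA (ae_logMeasure_pos.mono fun t ht => hup t f ht)).trans
      (mul_le_mul_right (hmax _ (htemp₁ f)) _)
  · exact (eLpNorm_le_const_mul_of_ae_le hB (ae_logMeasure_pos.mono fun t ht => hlow t f ht)).trans
      (mul_le_mul_right (hcomp _ (htemp₀ f)).2 _)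

end Reiteration

theorem theorem27_general {G : Type*} [AddCommGroup G] {N₀ N₁ : G → ℝ≥0∞}
    (h₀ : IsQuasiSeminorm N₀) (h₁ : IsQuasiSeminorm N₁) {θ₀ θ₁ θ : ℝ} (hθ₀ : 0 < θ₀)
    (hθ₀₁ : θ₀ < θ₁) (hθ₁ : θ₁ < 1) (hθ : 0 < θ) (hθ' : θ < 1) {r r₀ r₁ q₀ q₁ : ℝ≥0∞}
    (hr : 0 < r) (hr₀ : 0 < r₀) (hr₁ : 0 < r₁) (hq₀ : 0 < q₀) (hq₁ : 0 < q₁)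
    {a a₀ a₁ b₀ b₁ : ℝ → ℝ} (ha : SlowlyVarying a) (ha₀ : SlowlyVarying a₀)
    (ha₁ : SlowlyVarying a₁) (hb₀ : SlowlyVarying b₀) (hb₁ : SlowlyVarying b₁)
    (hfin₀ : LqNorm r₀ (Ioo 0 1) (svWgt r₀ (fun s => b₀ s / a₀ s)) ≠ ∞)
    (hfin₁ : LqNorm r₁ (Ioo 0 1) (svWgt r₁ (fun s => b₁ s / a₁ s)) ≠ ∞) {c₀ c₁ ρ : ℝ → ℝ}
    (hc₀ : ∀ t, c₀ t = a₀ t * (LqNorm r₀ (Ioo 0 t) (svWgt r₀ (fun s => b₀ s / a₀ s))).toReal)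
    (hc₁ : ∀ t, c₁ t = a₁ t * (LqNorm r₁ (Ioo 0 t) (svWgt r₁ (fun s => b₁ s / a₁ s))).toReal)
    (hρ : ∀ t, ρ t = t ^ (θ₁ - θ₀) * (c₀ t / c₁ t)) :
    EquivNorms (normK (normR N₀ N₁ θ₀ r₀ q₀ b₀ a₀) (normR N₀ N₁ θ₁ r₁ q₁ b₁ a₁) θ r a)
      (normK N₀ N₁ ((1 - θ) * θ₀ + θ * θ₁) r
        (fun t => c₀ t ^ (1 - θ) * c₁ t ^ θ * a (ρ t))) := by
  obtain rfl := funext hρ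
  rw [LqNorm_svWgt_eq_eLpNorm hr₀.ne'] at hfin₀
  rw [LqNorm_svWgt_eq_eLpNorm hr₁.ne'] at hfin₁
  simp only [LqNorm_svWgt_eq_eLpNorm hr₀.ne'] at hc₀
  simp only [LqNorm_svWgt_eq_eLpNorm hr₁.ne'] at hc₁
  obtain rfl := funext hc₀
  obtain rfl := funext hc₁
  have ha₀ := ha₀.potterBounded
  have ha₁ := ha₁.potterBounded
  have hb₀ := hb₀.potterBounded
  have hb₁ := hb₁.potterBounded
  exact (ha₀.isOfClass_normR hb₀ hr₀.ne' hq₀.ne' hfin₀ θ₀ N₀ N₁).equivNorms_normK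
    (ha₁.isOfClass_normR hb₁ hr₁.ne' hq₁.ne' hfin₁ θ₁ N₀ N₁) h₀ h₁ ha.potterBounded
    (ha₀.mul ((hb₀.div ha₀).initialNorm_toReal hr₀.ne' hfin₀))
    (ha₁.mul ((hb₁.div ha₁).initialNorm_toReal hr₁.ne' hfin₁)) hθ hθ' hθ₀ hθ₀₁ hθ₁ hr.ne'

theorem theorem27
    (A₀ A₁ : QuasiBanach E)
    (hne : ∃ x : E, x ≠ 0 ∧ A₀.N x ≠ ∞ ∧ A₁.N x ≠ ∞)
    (θ₀ θ₁ θ : ℝ) (hθ₀ : 0 < θ₀) (hθ₀₁ : θ₀ < θ₁) (hθ₁ : θ₁ < 1) (hθ : 0 < θ) (hθ' : θ < 1)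
    (r r₀ r₁ q₀ q₁ : ℝ≥0∞) (hr : 0 < r) (hr₀ : 0 < r₀) (hr₁ : 0 < r₁) (hq₀ : 0 < q₀) (hq₁ : 0 < q₁)
    (a a₀ a₁ b₀ b₁ : ℝ → ℝ)
    (h_sv_a : SlowlyVarying a)
    (h_sv_a₀ : SlowlyVarying a₀)
    (h_sv_a₁ : SlowlyVarying a₁)
    (h_sv_b₀ : SlowlyVarying b₀)
    (h_sv_b₁ : SlowlyVarying b₁)
    (hfin₀ : LqNorm r₀ (Ioo 0 1) (svWgt r₀ (fun s => b₀ s / a₀ s)) ≠ ∞)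
    (hfin₁ : LqNorm r₁ (Ioo 0 1) (svWgt r₁ (fun s => b₁ s / a₁ s)) ≠ ∞)
    (c₀ c₁ ρ : ℝ → ℝ)
    (hc₀ : ∀ t, c₀ t = a₀ t * (LqNorm r₀ (Ioo 0 t) (svWgt r₀ (fun s => b₀ s / a₀ s))).toReal)
    (hc₁ : ∀ t, c₁ t = a₁ t * (LqNorm r₁ (Ioo 0 t) (svWgt r₁ (fun s => b₁ s / a₁ s))).toReal)
    (hρ : ∀ t, ρ t = t ^ (θ₁ - θ₀) * (c₀ t / c₁ t)) :
    EquivNorms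
      (normK (normR A₀.N A₁.N θ₀ r₀ q₀ b₀ a₀) (normR A₀.N A₁.N θ₁ r₁ q₁ b₁ a₁) θ r a)
      (normK A₀.N A₁.N ((1 - θ) * θ₀ + θ * θ₁) r
        (fun t => c₀ t ^ (1 - θ) * c₁ t ^ θ * a (ρ t))) := by
  exact theorem27_general A₀.isQuasiSeminorm A₁.isQuasiSeminorm hθ₀ hθ₀₁ hθ₁ hθ hθ' hr hr₀ hr₁
    hq₀ hq₁ h_sv_a h_sv_a₀ h_sv_a₁ h_sv_b₀ h_sv_b₁ hfin₀ hfin₁ hc₀ hc₁ hρ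

end
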